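/- arXiv:1005.1306 — 3 statements merged into one kernel-verified Lean document; each statement's English description precedes it below -/
import Mathlib

section
/- Let n and j be positive integers with 4j ≤ n, and let M be distributed according to the Haar probability measure on U(n,ℂ). Then E[Tr(M^{2j}) + conj(Tr(M^{2j}))] = 0 and E[(Tr(M^{2j}) + conj(Tr(M^{2j})))²] = 4j. -/
open MeasureTheory ProbabilityTheory Matrix

/-- Matrices over a measurable space of entries carry the product σ-algebra
(the Borel σ-algebra, for matrices over `ℝ` or `ℂ`). -/
instance matrixMeasurableSpace {m n α : Type*} [MeasurableSpace α] :
    MeasurableSpace (Matrix m n α) :=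
  inferInstanceAs (MeasurableSpace (m → n → α))

/-- The trace of the `k`-th power (`k : ℤ`, negative powers via the inverse) of an
element of the unitary group `U(n,ℂ)`. -/
noncomputable def trU {n : ℕ} (M : Matrix.unitaryGroup (Fin n) ℂ) (k : ℤ) : ℂ :=
  Matrix.trace (((M ^ k : Matrix.unitaryGroup (Fin n) ℂ)) : Matrix (Fin n) (Fin n) ℂ)

/-- The standard normal cumulative distribution function
`Φ(x₀) = (1/√(2π)) ∫_{-∞}^{x₀} e^{-x²/2} dx`. -/
noncomputable def Phi (x₀ : ℝ) : ℝ :=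
  (Real.sqrt (2 * Real.pi))⁻¹ * ∫ x in Set.Iic x₀, Real.exp (-x ^ 2 / 2)

namespace HaarTrace

/-- The unitary group. -/
abbrev UG (n : ℕ) := Matrix.unitaryGroup (Fin n) ℂ

instance borelMat (n : ℕ) : BorelSpace (Matrix (Fin n) (Fin n) ℂ) :=
  inferInstanceAs (BorelSpace (Fin n → Fin n → ℂ))

instance scMat (n : ℕ) : SecondCountableTopology (Matrix (Fin n) (Fin n) ℂ) :=
  inferInstanceAs (SecondCountableTopology (Fin n → Fin n → ℂ))

instance borelUG (n : ℕ) : BorelSpace (UG n) := Subtype.borelSpace _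

instance compactUG (n : ℕ) : CompactSpace (UG n) := by
  suffices hs : IsCompact ((Matrix.unitaryGroup (Fin n) ℂ :
      Submonoid (Matrix (Fin n) (Fin n) ℂ)) : Set (Matrix (Fin n) (Fin n) ℂ)) from
    isCompact_iff_compactSpace.1 hs
  have hc : IsCompact (Set.pi Set.univ (fun _ : Fin n => Set.pi Set.univ
      (fun _ : Fin n => Metric.closedBall (0 : ℂ) 1))) :=
    isCompact_univ_pi fun _ => isCompact_univ_pi fun _ => isCompact_closedBall _ _
  refine IsCompact.of_isClosed_subset (X := Matrix (Fin n) (Fin n) ℂ) hc ?_ ?_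
  · have : ((Matrix.unitaryGroup (Fin n) ℂ : Submonoid (Matrix (Fin n) (Fin n) ℂ)) :
        Set (Matrix (Fin n) (Fin n) ℂ)) = {A | A * star A = 1} := by
      ext A; exact Matrix.mem_unitaryGroup_iff
    rw [this]
    exact isClosed_eq (by fun_prop) continuous_const
  · intro A hA
    exact fun i _ j _ => mem_closedBall_zero_iff.2 (entry_norm_bound_of_unitary hA i j)

variable {n : ℕ}

/-- Infinitesimal left invariance of the Haar measure along a one-parameter subgroup. -/
lemma ibp (μ : Measure (UG n)) [IsProbabilityMeasure μ] [μ.IsHaarMeasure]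
    (γ : ℝ → UG n) (hγ : ∀ s t, γ (s + t) = γ s * γ t)
    (F DF : C(UG n, ℂ))
    (hd : ∀ M, HasDerivAt (fun t => F (γ t * M)) (DF M) 0) :
    ∫ M, DF M ∂μ = 0 := by
  have hγ0 : γ 0 = 1 := by simpa using hγ 0 0
  have hint : ∀ f : C(UG n, ℂ), Integrable f μ := fun f =>
    f.continuous.integrable_of_hasCompactSupport (HasCompactSupport.of_compactSpace _)
  have key := hasDerivAt_integral_of_dominated_loc_of_deriv_le (μ := μ) (𝕜 := ℝ)
    (F := fun t M => F (γ t * M)) (F' := fun t M => DF (γ t * M)) (x₀ := 0)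
    (s := Set.univ) (bound := fun _ => ‖DF‖) Filter.univ_mem
    (Filter.Eventually.of_forall fun t =>
      (F.continuous.comp (continuous_const.mul continuous_id)).aestronglyMeasurable)
    (by simpa [hγ0] using hint F)
    (by simpa [hγ0] using DF.continuous.aestronglyMeasurable)
    (Filter.Eventually.of_forall fun M t _ => DF.norm_coe_le_norm _)
    (integrable_const _)
    (Filter.Eventually.of_forall fun M t _ => by
      have h1 := hd (γ t * M)
      have h2 : HasDerivAt (fun s => F (γ (s - t) * (γ t * M))) (DF (γ t * M)) t := by
        have := HasDerivAt.comp_sub_const (f := fun s => F (γ s * (γ t * M))) (f' := DF (γ t * M)) t t (by simpa using h1)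
        simpa using this
      refine h2.congr_of_eventuallyEq (Filter.Eventually.of_forall fun s => ?_)
      simp only [← mul_assoc, ← hγ, sub_add_cancel])
  have h1 := key.2
  have h2 : (fun t => ∫ M, F (γ t * M) ∂μ) = fun _ => ∫ M, F M ∂μ := by
    funext t
    exact MeasureTheory.integral_mul_left_eq_self (fun M => F M) (γ t)
  rw [h2] at h1
  have := h1.unique (hasDerivAt_const _ _)
  simpa [hγ0] using this

section exp
attribute [local instance] Matrix.linftyOpNormedRing Matrix.linftyOpNormedAlgebra

/-- The one-parameter subgroup. -/
lemma exists_gamma (X : Matrix (Fin n) (Fin n) ℂ) (hX : star X = -X) :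
    ∃ γ : ℝ → UG n, (∀ s t, γ (s + t) = γ s * γ t) ∧
      HasDerivAt (fun t => (γ t : Matrix (Fin n) (Fin n) ℂ)) X 0 ∧
      HasDerivAt (fun t => star (γ t : Matrix (Fin n) (Fin n) ℂ)) (-X) 0 := by
  have hst : ∀ t : ℝ, star (NormedSpace.exp (t • X)) = NormedSpace.exp (t • (-X)) := by
    intro t
    rw [Matrix.star_eq_conjTranspose, ← Matrix.exp_conjTranspose, ← Matrix.star_eq_conjTranspose,
      star_smul, hX]
    simp
  have hadd : ∀ s t : ℝ, NormedSpace.exp ((s + t) • X) =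
      NormedSpace.exp (s • X) * NormedSpace.exp (t • X) := by
    intro s t
    rw [add_smul, Matrix.exp_add_of_commute]
    exact ((Commute.refl X).smul_left s).smul_right t
  refine ⟨fun t => ⟨NormedSpace.exp (t • X), ?_⟩, ?_, ?_, ?_⟩
  · rw [Matrix.mem_unitaryGroup_iff, hst, smul_neg, ← neg_smul, ← hadd]
    simp
  · intro s t
    exact Subtype.ext (hadd s t)
  · have := hasDerivAt_exp_smul_const (𝕂 := ℝ) X 0
    simp only [zero_smul, NormedSpace.exp_zero, one_mul] at this
    exact this
  · have := hasDerivAt_exp_smul_const (𝕂 := ℝ) (-X) 0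
    simp only [zero_smul, NormedSpace.exp_zero, one_mul] at this
    simp only [hst]
    exact this

lemma hasDerivAt_pow_left {A : ℝ → Matrix (Fin n) (Fin n) ℂ} (X M : Matrix (Fin n) (Fin n) ℂ)
   (hA : HasDerivAt A X 0) (hA0 : A 0 = 1) (k : ℕ) :
    HasDerivAt (fun t => (A t * M) ^ k)
      (∑ i ∈ Finset.range k, M ^ (k - 1 - i) * X * M ^ (i + 1)) 0 := by
  have := (hA.mul_const M).fun_pow' k
  simp only [hA0, one_mul] at this
  have e : (∑ i ∈ Finset.range k, M ^ (k - 1 - i) * X * M ^ (i + 1)) =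
      ∑ i ∈ Finset.range k, M ^ (k.pred - i) * (X * M) * M ^ i := by
    refine Finset.sum_congr rfl fun i hi => ?_
    simp [pow_succ', mul_assoc]
  rw [e]
  exact this

lemma hasDerivAt_pow_right {A : ℝ → Matrix (Fin n) (Fin n) ℂ} (X M : Matrix (Fin n) (Fin n) ℂ)
   (hA : HasDerivAt A X 0) (hA0 : A 0 = 1) (k : ℕ) :
    HasDerivAt (fun t => (M * A t) ^ k)
      (∑ i ∈ Finset.range k, M ^ (k - i) * X * M ^ i) 0 := by
  have := (hA.const_mul M).fun_pow' k
  simp only [hA0, mul_one] at this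
  have e : (∑ i ∈ Finset.range k, M ^ (k - i) * X * M ^ i) =
      ∑ i ∈ Finset.range k, M ^ (k.pred - i) * (M * X) * M ^ i := by
    refine Finset.sum_congr rfl fun i hi => ?_
    have hi := Finset.mem_range.1 hi
    rw [show k - i = k.pred - i + 1 by simp; omega, pow_succ]
    simp [mul_assoc]
  rw [e]
  exact this

lemma hasDerivAt_linear (L : Matrix (Fin n) (Fin n) ℂ →ₗ[ℂ] ℂ)
    {A : ℝ → Matrix (Fin n) (Fin n) ℂ} {A' : Matrix (Fin n) (Fin n) ℂ} {t : ℝ}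
    (hA : HasDerivAt A A' t) : HasDerivAt (fun t => L (A t)) (L A') t := by
  have := ((LinearMap.toContinuousLinearMap L).restrictScalars ℝ).hasFDerivAt.comp_hasDerivAt t hA
  exact this
end exp

lemma hasDerivAt_multiset_prod (s : Multiset ℕ) (g : ℕ → ℝ → ℂ) (g' : ℕ → ℂ) (t : ℝ)
    (h : ∀ i ∈ s, HasDerivAt (g i) (g' i) t) :
    HasDerivAt (fun x => (s.map (fun i => g i x)).prod)
      (s.map (fun i => ((s.erase i).map (fun j => g j t)).prod * g' i)).sum t := by
  have h1 := (HasFDerivAt.multiset_prod (fun i hi => (h i hi).hasFDerivAt)).hasDerivAt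
  have : ∀ (u : Multiset ℕ) (f : ℕ → ℝ →L[ℝ] ℂ),
      (u.map f).sum 1 = (u.map (fun i => f i 1)).sum := by
    intro u f
    induction u using Multiset.induction with
    | empty => simp
    | cons a u ih => simp [ih]
  rw [this] at h1
  simpa using h1

/-- Trace of a power. -/
noncomputable def P (k : ℕ) : C(UG n, ℂ) :=
  ⟨fun M => Matrix.trace ((M : Matrix (Fin n) (Fin n) ℂ) ^ k), by fun_prop⟩

/-- Trace of a power of the adjoint. -/
noncomputable def Q (k : ℕ) : C(UG n, ℂ) :=
  ⟨fun M => Matrix.trace ((star (M : Matrix (Fin n) (Fin n) ℂ)) ^ k), by fun_prop⟩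

/-- Products of traces of powers of the adjoint. -/
noncomputable def QQ (s : Multiset ℕ) : C(UG n, ℂ) := (s.map Q).prod

lemma QQ_apply (s : Multiset ℕ) (M : UG n) : QQ s M = (s.map (fun i => Q i M)).prod := by
  induction s using Multiset.induction with
  | empty => simp [QQ]
  | cons a u ih => simp only [QQ, Multiset.map_cons, Multiset.prod_cons,
      ContinuousMap.mul_apply] at ih ⊢; rw [ih]

/-- Entry of a power of the adjoint. -/
noncomputable def ent (m : ℕ) (a b : Fin n) : C(UG n, ℂ) :=
  ⟨fun M => ((star (M : Matrix (Fin n) (Fin n) ℂ)) ^ m) a b, by fun_prop⟩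

/-- Derivative of an entry. -/
noncomputable def dent (m : ℕ) (a b : Fin n) (X : Matrix (Fin n) (Fin n) ℂ) : C(UG n, ℂ) :=
  ⟨fun M => (∑ i ∈ Finset.range m, (star (M : Matrix (Fin n) (Fin n) ℂ)) ^ (m - i) * X *
    (star (M : Matrix (Fin n) (Fin n) ℂ)) ^ i) a b, by fun_prop⟩

/-- Derivative of `Q`, up to factor. -/
noncomputable def dQ (m : ℕ) (X : Matrix (Fin n) (Fin n) ℂ) : C(UG n, ℂ) :=
  ⟨fun M => Matrix.trace ((star (M : Matrix (Fin n) (Fin n) ℂ)) ^ m * X), by fun_prop⟩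

/-- Derivative of `P`, up to factor. -/
noncomputable def dP (m : ℕ) (X : Matrix (Fin n) (Fin n) ℂ) : C(UG n, ℂ) :=
  ⟨fun M => Matrix.trace (X * (M : Matrix (Fin n) (Fin n) ℂ) ^ m), by fun_prop⟩

/-- Total derivative. -/
noncomputable def D (m : ℕ) (s : Multiset ℕ) (k : ℕ) (a b : Fin n)
    (X : Matrix (Fin n) (Fin n) ℂ) : C(UG n, ℂ) :=
  - (dent m a b X * QQ s * P k)
  - (ent m a b * (s.map (fun c => QQ (s.erase c) * ((c : ℂ) • dQ c X))).sum * P k)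
  + ent m a b * QQ s * ((k : ℂ) • dP k X)

lemma sum_apply' (s : Multiset ℕ) (f : ℕ → C(UG n, ℂ)) (M : UG n) :
    (s.map f).sum M = (s.map (fun i => f i M)).sum := by
  induction s using Multiset.induction with
  | empty => simp
  | cons a u ih => simp only [Multiset.map_cons, Multiset.sum_cons,
      ContinuousMap.add_apply, ih]

lemma D_linear (m : ℕ) (s : Multiset ℕ) (k : ℕ) (a b : Fin n)
    (X Y : Matrix (Fin n) (Fin n) ℂ) (c : ℂ) :
    D m s k a b (X + c • Y) = D m s k a b X + c • D m s k a b Y := by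
  have h1 : dent m a b (X + c • Y) = dent m a b X + c • dent m a b Y := by
    ext M
    simp [dent, mul_add, add_mul, Finset.sum_add_distrib, Finset.mul_sum, Matrix.sum_apply]
  have h2 : ∀ m, dQ m (X + c • Y) = dQ m X + c • dQ m Y := by
    intro m; ext M
    simp [dQ, mul_add]
  have h3 : dP k (X + c • Y) = dP k X + c • dP k Y := by
    ext M
    simp [dP, add_mul]
  have h4 : (s.map (fun e => QQ (s.erase e) * ((e : ℂ) • dQ e (X + c • Y)))).sum =
    (s.map (fun e => QQ (s.erase e) * ((e : ℂ) • dQ e X))).sum +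
    c • (s.map (fun e => QQ (s.erase e) * ((e : ℂ) • dQ e Y))).sum := by
    rw [Multiset.smul_sum, Multiset.map_map, ← Multiset.sum_map_add]
    congr 1
    refine Multiset.map_congr rfl fun e _ => ?_
    ext M
    simp [h2]
    ring
  unfold D
  rw [h1, h3, h4]
  ext M
  simp
  ring

lemma D_deriv (m : ℕ) (s : Multiset ℕ) (k : ℕ) (a b : Fin n)
    (X : Matrix (Fin n) (Fin n) ℂ) (γ : ℝ → UG n) (h0 : γ 0 = 1)
    (h1 : HasDerivAt (fun t => (γ t : Matrix (Fin n) (Fin n) ℂ)) X 0)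
    (h2 : HasDerivAt (fun t => star (γ t : Matrix (Fin n) (Fin n) ℂ)) (-X) 0) (M : UG n) :
    HasDerivAt (fun t : ℝ => (ent m a b * QQ s * P k : C(UG n, ℂ)) (γ t * M)) (D m s k a b X M) 0 := by
  set B : Matrix (Fin n) (Fin n) ℂ := star (M : Matrix (Fin n) (Fin n) ℂ) with hB
  have e1 : HasDerivAt (fun t => ent m a b (γ t * M)) (-dent m a b X M) 0 := by
    have := hasDerivAt_linear (Matrix.entryLinearMap ℂ ℂ a b)
      (hasDerivAt_pow_right (-X) B h2 (by simp [h0]) m)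
    simpa [ent, dent, Matrix.entryLinearMap_apply] using this
  have e2 : ∀ c, HasDerivAt (fun t => Q c (γ t * M)) (-((c : ℂ) * dQ c X M)) 0 := by
    intro c
    have := hasDerivAt_linear (Matrix.traceLinearMap (Fin n) ℂ ℂ)
      (hasDerivAt_pow_right (-X) B h2 (by simp [h0]) c)
    have e : (Matrix.traceLinearMap (Fin n) ℂ ℂ)
      (∑ i ∈ Finset.range c, B ^ (c - i) * (-X) * B ^ i) = -((c : ℂ) * dQ c X M) := by
      rw [map_sum, Finset.sum_congr rfl (g := fun _ => - dQ c X M)]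
      · simp
      · intro i hi
        have hi := Finset.mem_range.1 hi
        rw [Matrix.traceLinearMap_apply, Matrix.trace_mul_comm, ← mul_assoc, ← pow_add,
          show i + (c - i) = c by omega]
        simp [dQ, hB]
    rw [e] at this
    simpa [Q] using this
  have e3 : HasDerivAt (fun t => P k (γ t * M)) ((k : ℂ) * dP k X M) 0 := by
    have := hasDerivAt_linear (Matrix.traceLinearMap (Fin n) ℂ ℂ)
      (hasDerivAt_pow_left X (M : Matrix (Fin n) (Fin n) ℂ) h1 (by simp [h0]) k)
    have e : (Matrix.traceLinearMap (Fin n) ℂ ℂ)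
      (∑ i ∈ Finset.range k, (M : Matrix (Fin n) (Fin n) ℂ) ^ (k - 1 - i) * X *
        (M : Matrix (Fin n) (Fin n) ℂ) ^ (i + 1)) = (k : ℂ) * dP k X M := by
      rw [map_sum, Finset.sum_congr rfl (g := fun _ => dP k X M)]
      · simp
      · intro i hi
        have hi := Finset.mem_range.1 hi
        rw [Matrix.traceLinearMap_apply, mul_assoc, Matrix.trace_mul_comm, mul_assoc, ← pow_add,
          show i + 1 + (k - 1 - i) = k by omega]
        simp [dP]
    rw [e] at this
    simpa [P] using this
  have e4 : HasDerivAt (fun t => QQ s (γ t * M))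
      (-(s.map (fun c => QQ (s.erase c) * ((c : ℂ) • dQ c X)) : Multiset C(UG n, ℂ)).sum M) 0 := by
    have := hasDerivAt_multiset_prod s (fun c t => Q c (γ t * M)) _ 0 (fun c _ => e2 c)
    simp only [← QQ_apply] at this
    have e : (-(s.map (fun c => QQ (s.erase c) * ((c : ℂ) • dQ c X)) :
        Multiset C(UG n, ℂ)).sum M) =
        (s.map (fun i => QQ (s.erase i) (γ 0 * M) * -((i : ℂ) * dQ i X M))).sum := by
      rw [sum_apply', ← Multiset.sum_map_neg]
      congr 1
      refine Multiset.map_congr rfl fun c _ => ?_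
      simp only [h0, one_mul, ContinuousMap.mul_apply, ContinuousMap.smul_apply, smul_eq_mul,
        mul_neg]
    rw [e]
    exact this
  have := (e1.mul e4).mul e3
  have e : D m s k a b X M = (-dent m a b X M * QQ s (γ 0 * M) + ent m a b (γ 0 * M) *
      -(s.map (fun c => QQ (s.erase c) * ((c : ℂ) • dQ c X)) : Multiset C(UG n, ℂ)).sum M) *
      P k (γ 0 * M) + (ent m a b (γ 0 * M) * QQ s (γ 0 * M)) * ((k : ℂ) * dP k X M) := by
    simp only [D, h0, one_mul, ContinuousMap.add_apply, ContinuousMap.sub_apply,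
      ContinuousMap.neg_apply, ContinuousMap.mul_apply, ContinuousMap.smul_apply, smul_eq_mul]
    ring
  rw [e]
  exact this

lemma cint (μ : Measure (UG n)) [IsProbabilityMeasure μ] (f : C(UG n, ℂ)) : Integrable f μ :=
  f.continuous.integrable_of_hasCompactSupport (HasCompactSupport.of_compactSpace _)

/-- Expectation as a linear functional. -/
noncomputable def E (μ : Measure (UG n)) [IsProbabilityMeasure μ] : C(UG n, ℂ) →ₗ[ℂ] ℂ where
  toFun f := ∫ M, f M ∂μ
  map_add' f g := by simpa using integral_add (cint μ f) (cint μ g)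
  map_smul' c f := by simpa using integral_const_mul (μ := μ) c f

lemma E_D (μ : Measure (UG n)) [IsProbabilityMeasure μ] [μ.IsHaarMeasure]
    (m : ℕ) (s : Multiset ℕ) (k : ℕ) (a b : Fin n)
    (X : Matrix (Fin n) (Fin n) ℂ) : E μ (D m s k a b X) = 0 := by
  have hs : ∀ X : Matrix (Fin n) (Fin n) ℂ, star X = -X → E μ (D m s k a b X) = 0 := by
    intro X hX
    obtain ⟨γ, h, h1, h2⟩ := exists_gamma X hX
    exact ibp μ γ h (ent m a b * QQ s * P k) _
      (D_deriv m s k a b X γ (by simpa using h 0 0) h1 h2)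
  have hd : X = (1 / 2 : ℂ) • (X - star X) +
      (1 / 2 * Complex.I : ℂ) • ((-Complex.I) • (X + star X)) := by
    rw [smul_smul, mul_assoc, mul_neg, Complex.I_mul_I]
    ext i j
    simp
    ring
  have e1 := hs ((1 / 2 : ℂ) • (X - star X)) (by
    ext i j; simp [Matrix.star_apply]; ring)
  have e2 := hs ((-Complex.I) • (X + star X)) (by
    ext i j; simp [Matrix.star_apply, add_comm])
  rw [hd, D_linear, map_add, map_smul, e1, e2]
  simp

lemma E_loop (μ : Measure (UG n)) [IsProbabilityMeasure μ] [μ.IsHaarMeasure]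
    (m : ℕ) (s : Multiset ℕ) (k : ℕ) (hmk : m ≤ k) :
    (∑ i ∈ Finset.range m, E μ (Q (m - i) * Q i * QQ s * P k)) +
      (s.map (fun c : ℕ => (c : ℂ) * E μ (QQ ((m + c) ::ₘ s.erase c) * P k))).sum =
      (k : ℂ) * E μ (QQ s * P (k - m)) := by
  have h0 : ∑ a, ∑ b, E μ (D m s k a b (Matrix.single a b 1)) = 0 := by simp [E_D]
  simp only [← map_sum] at h0
  have h1 : (∑ a : Fin n, ∑ b : Fin n, D m s k a b (Matrix.single a b 1)) =
      - (∑ i ∈ Finset.range m, Q (m - i) * Q i * QQ s * P k)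
      - (s.map (fun c : ℕ => (c : ℂ) • (QQ ((m + c) ::ₘ s.erase c) * P k))).sum
      + (k : ℂ) • (QQ s * P (k - m)) := by
    have d1 : ∑ a : Fin n, ∑ b : Fin n, dent m a b (Matrix.single a b 1) =
        ∑ i ∈ Finset.range m, Q (m - i) * Q i := by
      ext M
      simp only [ContinuousMap.sum_apply, dent, Q, ContinuousMap.coe_mk,
        ContinuousMap.mul_apply, Matrix.sum_apply, Matrix.trace, Matrix.diag, Finset.sum_mul_sum]
      have hh : ∀ (A C : Matrix (Fin n) (Fin n) ℂ) (a b : Fin n),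
          (A * Matrix.single a b 1 * C : Matrix (Fin n) (Fin n) ℂ) a b = A a a * C b b := by
        intro A C a b
        rw [mul_assoc, Matrix.mul_apply, Finset.sum_eq_single a]
        · simp
        · intro c _ hc; simp [Matrix.single_mul_apply_of_ne, hc]
        · simp
      simp only [hh]
      simp only [Finset.sum_comm (s := Finset.univ) (t := Finset.range m)]
    have d2 : ∀ c, ∑ a : Fin n, ∑ b : Fin n, ent m a b * dQ c (Matrix.single a b 1) =
        Q (m + c) := by
      intro c
      ext M
      simp only [ContinuousMap.sum_apply, dQ, ent, Q, ContinuousMap.coe_mk,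
        ContinuousMap.mul_apply, pow_add, Matrix.trace_mul_single]
      simp [Matrix.trace, Matrix.mul_apply]
    have d3 : ∑ a : Fin n, ∑ b : Fin n, ent m a b * dP k (Matrix.single a b 1) =
        P (k - m) := by
      ext M
      have e : Matrix.trace ((M : Matrix (Fin n) (Fin n) ℂ) ^ (k - m)) =
          Matrix.trace ((star (M : Matrix (Fin n) (Fin n) ℂ)) ^ m *
            (M : Matrix (Fin n) (Fin n) ℂ) ^ k) := by
        have h1 : star (M : Matrix (Fin n) (Fin n) ℂ) * (M : Matrix (Fin n) (Fin n) ℂ) = 1 :=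
          Matrix.mem_unitaryGroup_iff'.1 M.2
        have h2 : ∀ m, (star (M : Matrix (Fin n) (Fin n) ℂ)) ^ m *
            (M : Matrix (Fin n) (Fin n) ℂ) ^ m = 1 := by
          intro m
          induction m with
          | zero => simp
          | succ m ih =>
            rw [pow_succ, pow_succ', mul_assoc, ← mul_assoc (star _) _ (_ ^ m), h1, one_mul, ih]
        rw [show (M : Matrix (Fin n) (Fin n) ℂ) ^ k = M ^ m * M ^ (k - m) by
          rw [← pow_add]; congr 1; omega, ← mul_assoc, h2, one_mul]
      simp only [ContinuousMap.sum_apply, dP, ent, P, ContinuousMap.coe_mk,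
        ContinuousMap.mul_apply, e, Matrix.trace_single_mul]
      simp [Matrix.trace, Matrix.mul_apply]
    have d4 : ∀ u : Multiset ℕ,
        (u.map (fun c : ℕ => (c : ℂ) • (QQ ((m + c) ::ₘ s.erase c) * P k))).sum =
        ∑ a : Fin n, ∑ b : Fin n, (ent m a b * (u.map (fun c => QQ (s.erase c) *
          ((c : ℂ) • dQ c (Matrix.single a b 1)))).sum * P k : C(UG n, ℂ)) := by
      intro u
      induction u using Multiset.induction with
      | empty => simp
      | cons c u ih =>
        simp only [Multiset.map_cons, Multiset.sum_cons, ih, mul_add, add_mul,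
          Finset.sum_add_distrib]
        congr 1
        rw [QQ, Multiset.map_cons, Multiset.prod_cons, ← d2, ← QQ]
        simp only [Finset.sum_mul, Finset.smul_sum]
        refine Finset.sum_congr rfl fun a _ => Finset.sum_congr rfl fun b _ => ?_
        ext M
        simp only [ContinuousMap.mul_apply, ContinuousMap.smul_apply, smul_eq_mul]
        ring
    rw [d4, ← d3, ← Finset.sum_mul, ← Finset.sum_mul, ← d1]
    simp only [D, Finset.sum_add_distrib, Finset.sum_sub_distrib, Finset.sum_neg_distrib,
      Finset.sum_mul, Finset.mul_sum, Finset.smul_sum]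
    congr 1
    refine Finset.sum_congr rfl fun a _ => Finset.sum_congr rfl fun b _ => ?_
    ext M
    simp only [ContinuousMap.mul_apply, ContinuousMap.smul_apply, smul_eq_mul]
    ring
  rw [h1] at h0
  rw [map_add, map_sub, map_neg, map_sum, map_smul, map_multiset_sum, Multiset.map_map] at h0
  simp only [Function.comp_def, map_smul, smul_eq_mul] at h0
  linear_combination -h0

lemma QQ_cons (a : ℕ) (s : Multiset ℕ) : (QQ (a ::ₘ s) : C(UG n, ℂ)) = Q a * QQ s := by
  simp [QQ]

lemma Q_zero : (Q 0 : C(UG n, ℂ)) = (n : ℂ) • 1 := by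
  ext M; simp [Q]

lemma P_zero : (P 0 : C(UG n, ℂ)) = (n : ℂ) • 1 := by
  ext M; simp [P]

lemma E_one (μ : Measure (UG n)) [IsProbabilityMeasure μ] : E μ 1 = 1 := by
  simp [E]

lemma E_loop' (μ : Measure (UG n)) [IsProbabilityMeasure μ] [μ.IsHaarMeasure]
    (m : ℕ) (s : Multiset ℕ) (k : ℕ) (hmk : m + 1 ≤ k) :
    (n : ℂ) * E μ (QQ ((m + 1) ::ₘ s) * P k) +
    (∑ i ∈ Finset.range m, E μ (QQ ((m - i) ::ₘ (i + 1) ::ₘ s) * P k)) +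
      (s.map (fun c : ℕ => (c : ℂ) * E μ (QQ ((m + 1 + c) ::ₘ s.erase c) * P k))).sum =
      (k : ℂ) * E μ (QQ s * P (k - (m + 1))) := by
  rw [← E_loop μ (m + 1) s k hmk, Finset.sum_range_succ', Q_zero, ← smul_eq_mul, ← map_smul]
  simp only [QQ_cons, Nat.sub_zero, Nat.add_sub_add_right]
  congr 1
  rw [add_comm]
  congr 1
  · refine Finset.sum_congr rfl fun i _ => ?_
    congr 1; ring
  · congr 1
    ext M; simp

lemma E_QQ_P (μ : Measure (UG n)) [IsProbabilityMeasure μ] [μ.IsHaarMeasure] (k : ℕ) :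
    1 ≤ k → k ≤ n → ∀ s : Multiset ℕ, (∀ i ∈ s, 0 < i) → s.sum = k →
      E μ (QQ s * P k) = if s.card = 1 then (k : ℂ) else 0 := by
  induction k using Nat.strong_induction_on with
  | _ k ih =>
  intro hk1 hkn
  set c : Multiset ℕ → ℂ := fun s => if s.card = 1 then (k : ℂ) else 0 with hc
  set d : Multiset ℕ → ℂ := fun s => E μ (QQ s * P k) - c s with hd
  have heq : ∀ (m : ℕ) (s : Multiset ℕ), (∀ i ∈ s, 0 < i) → (m + 1) + s.sum = k →
      (n : ℂ) * d ((m + 1) ::ₘ s) +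
      (∑ i ∈ Finset.range m, d ((m - i) ::ₘ (i + 1) ::ₘ s)) +
      (s.map (fun e : ℕ => (e : ℂ) * d ((m + 1 + e) ::ₘ s.erase e))).sum = 0 := by
    intro m s hs hsum
    have h1 := E_loop' μ m s k (by omega)
    have h2 : (n : ℂ) * c ((m + 1) ::ₘ s) +
      (∑ i ∈ Finset.range m, c ((m - i) ::ₘ (i + 1) ::ₘ s)) +
      (s.map (fun e : ℕ => (e : ℂ) * c ((m + 1 + e) ::ₘ s.erase e))).sum =
      (k : ℂ) * E μ (QQ s * P (k - (m + 1))) := by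
      have hz : (∑ i ∈ Finset.range m, c ((m - i) ::ₘ (i + 1) ::ₘ s)) = 0 := by
        simp [hc]
      rw [hz]
      by_cases h0 : s.card = 0
      · obtain rfl := Multiset.card_eq_zero.1 h0
        have : k - (m + 1) = 0 := by simp at hsum; omega
        rw [this, P_zero]
        simp [QQ, E_one, hc]
        ring
      · have hpos : 1 ≤ k - (m + 1) := by
          obtain ⟨a, ha⟩ := Multiset.exists_mem_of_ne_zero (s := s) (fun h => h0 (by simp [h]))
          have := Multiset.single_le_sum (fun x _ => Nat.zero_le x) a ha
          have := hs a ha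
          omega
        rw [ih (k - (m + 1)) (by omega) hpos (by omega) s hs (by omega)]
        by_cases h1 : s.card = 1
        · obtain ⟨a, rfl⟩ := Multiset.card_eq_one.1 h1
          have : k - (m + 1) = a := by simp at hsum; omega
          rw [this]
          simp [hc]
          ring
        · have : (s.map (fun e : ℕ => (e : ℂ) * c ((m + 1 + e) ::ₘ s.erase e))).sum = 0 := by
            apply Multiset.sum_eq_zero
            intro x hx
            obtain ⟨e, he, rfl⟩ := Multiset.mem_map.1 hx
            have h3 := Multiset.card_erase_add_one he
            have : ¬ (s.erase e).card = 0 := by omega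
            simp only [hc, Multiset.card_cons]
            rw [if_neg (by omega)]
            simp
          rw [this]
          simp [hc, h0, h1]
    have h3 : (s.map (fun e : ℕ => (e : ℂ) * d ((m + 1 + e) ::ₘ s.erase e))).sum =
        (s.map (fun e : ℕ => (e : ℂ) * E μ (QQ ((m + 1 + e) ::ₘ s.erase e) * P k))).sum -
        (s.map (fun e : ℕ => (e : ℂ) * c ((m + 1 + e) ::ₘ s.erase e))).sum := by
      rw [← Multiset.sum_map_sub]
      simp only [hd, mul_sub]
    rw [h3]
    simp only [hd, Finset.sum_sub_distrib]
    linear_combination h1 - h2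
  obtain ⟨p0, hp0⟩ := Finite.exists_max (fun p : Nat.Partition k => ‖d p.parts‖)
  have hmax : ∀ s : Multiset ℕ, (∀ i ∈ s, 0 < i) → s.sum = k → ‖d s‖ ≤ ‖d p0.parts‖ :=
    fun s hs hsum => hp0 ⟨s, fun {i} hi => hs i hi, hsum⟩
  set C := ‖d p0.parts‖ with hC
  have hC0 : C = 0 := by
    obtain ⟨a, ha⟩ := Multiset.exists_mem_of_ne_zero (s := p0.parts) (fun h => by
      have := p0.parts_sum
      rw [h] at this; simp at this; omega)
    obtain ⟨s, hs⟩ := Multiset.exists_cons_of_mem ha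
    have hapos := p0.parts_pos ha
    obtain ⟨m, rfl⟩ : ∃ m, a = m + 1 := ⟨a - 1, by omega⟩
    have hspos : ∀ i ∈ s, 0 < i := fun i hi =>
      p0.parts_pos (by rw [hs]; exact Multiset.mem_cons_of_mem hi)
    have hsum : (m + 1) + s.sum = k := by
      rw [← p0.parts_sum, hs, Multiset.sum_cons]
    have h1 := heq m s hspos hsum
    rw [← hs] at h1
    have b1 : ‖∑ i ∈ Finset.range m, d ((m - i) ::ₘ (i + 1) ::ₘ s)‖ ≤ m * C := by
      refine (norm_sum_le_of_le _ (f := fun i => d ((m - i) ::ₘ (i + 1) ::ₘ s))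
        (n := fun _ => C) fun i hi => ?_).trans (by simp)
      have hi := Finset.mem_range.1 hi
      refine hmax _ ?_ ?_
      · intro x hx
        simp only [Multiset.mem_cons] at hx
        rcases hx with rfl | rfl | hx
        · omega
        · omega
        · exact hspos x hx
      · simp only [Multiset.sum_cons]; omega
    have b2 : ∀ u : Multiset ℕ, u ≤ s →
        ‖(u.map (fun e : ℕ => (e : ℂ) * d ((m + 1 + e) ::ₘ s.erase e))).sum‖ ≤ u.sum * C := by
      intro u
      induction u using Multiset.induction with
      | empty => simp
      | cons e u ihu =>
        intro hu
        have he : e ∈ s := Multiset.mem_of_le hu (Multiset.mem_cons_self e u)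
        have hu' : u ≤ s := (Multiset.le_cons_self u e).trans hu
        have h4 : ‖d ((m + 1 + e) ::ₘ s.erase e)‖ ≤ C := by
          refine hmax _ ?_ ?_
          · intro x hx
            simp only [Multiset.mem_cons] at hx
            rcases hx with rfl | hx
            · omega
            · exact hspos x (Multiset.mem_of_mem_erase hx)
          · have := Multiset.sum_erase he
            simp only [Multiset.sum_cons]; omega
        rw [Multiset.map_cons, Multiset.sum_cons, Multiset.sum_cons]
        refine (norm_add_le _ _).trans ?_
        rw [norm_mul, Complex.norm_natCast]
        rw [Nat.cast_add]
        have := ihu hu'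
        have := mul_le_mul_of_nonneg_left h4 (Nat.cast_nonneg (α := ℝ) e)
        linarith
    have b2 := b2 s le_rfl
    have h5 : (n : ℝ) * C ≤ m * C + s.sum * C := by
      have : (n : ℂ) * d p0.parts = -((∑ i ∈ Finset.range m, d ((m - i) ::ₘ (i + 1) ::ₘ s)) +
        (s.map (fun e : ℕ => (e : ℂ) * d ((m + 1 + e) ::ₘ s.erase e))).sum) := by
        linear_combination h1
      have h6 := congrArg norm this
      rw [norm_mul, Complex.norm_natCast, norm_neg] at h6
      rw [hC, h6]
      exact (norm_add_le _ _).trans (add_le_add b1 b2)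
    have h7 : (m : ℝ) + 1 + (s.sum : ℕ) ≤ n := by
      have : m + 1 + s.sum ≤ n := by omega
      exact_mod_cast this
    have : 0 ≤ C := norm_nonneg _
    nlinarith
  intro s hs hsum
  have := hmax s hs hsum
  rw [hC0] at this
  have := norm_le_zero_iff.1 this
  simp only [hd, sub_eq_zero] at this
  rw [this]

lemma E_scale (μ : Measure (UG n)) [IsProbabilityMeasure μ] [μ.IsHaarMeasure]
    (f : C(UG n, ℂ)) (z w : ℂ) (hz : z * star z = 1) (hw : w ≠ 1)
    (hf : ∀ M N : UG n, (N : Matrix (Fin n) (Fin n) ℂ) = z • (M : Matrix (Fin n) (Fin n) ℂ) →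
      f N = w * f M) : E μ f = 0 := by
  let g : UG n := ⟨z • (1 : Matrix (Fin n) (Fin n) ℂ), by
    rw [Matrix.mem_unitaryGroup_iff, star_smul, star_one, smul_mul_smul_comm, hz]; simp⟩
  have h1 : ∫ M, f (g * M) ∂μ = ∫ M, f M ∂μ :=
    MeasureTheory.integral_mul_left_eq_self (fun M => f M) g
  have h2 : ∀ M, f (g * M) = w * f M := fun M => hf M (g * M) (by simp [g])
  simp only [h2, integral_const_mul] at h1
  have h3 : (w - 1) * E μ f = 0 := by
    change (w - 1) * ∫ M, f M ∂μ = 0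
    linear_combination h1
  exact (mul_eq_zero.1 h3).resolve_left (sub_ne_zero.2 hw)

end HaarTrace

/-- For Haar-distributed `M` in `U(n,ℂ)` and `4j ≤ n`:
`E[Tr(M^{2j}) + conj(Tr(M^{2j}))] = 0` and `E[(Tr(M^{2j}) + conj(Tr(M^{2j})))²] = 4j`. -/
theorem u_trace_2j_mean_second_moment (n j : ℕ) (hn : 0 < n) (hj : 0 < j)
    (h : 4 * j ≤ n)
    (μ : Measure (Matrix.unitaryGroup (Fin n) ℂ)) [IsProbabilityMeasure μ]
    [μ.IsHaarMeasure] :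
    (∫ M, (trU M ((2 * j : ℕ) : ℤ) + (starRingEnd ℂ) (trU M ((2 * j : ℕ) : ℤ))) ∂μ = 0) ∧
      ∫ M, (trU M ((2 * j : ℕ) : ℤ) + (starRingEnd ℂ) (trU M ((2 * j : ℕ) : ℤ))) ^ 2 ∂μ =
        4 * j := by
  have hT : ∀ M : Matrix.unitaryGroup (Fin n) ℂ, trU M ((2 * j : ℕ) : ℤ) = HaarTrace.P (2 * j) M := by
    intro M
    simp only [trU, zpow_natCast, HaarTrace.P, ContinuousMap.coe_mk]
    simp
  have hS : ∀ M : Matrix.unitaryGroup (Fin n) ℂ,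
      (starRingEnd ℂ) (trU M ((2 * j : ℕ) : ℤ)) = HaarTrace.Q (2 * j) M := by
    intro M
    rw [hT]
    simp only [HaarTrace.P, HaarTrace.Q, ContinuousMap.coe_mk, Matrix.star_eq_conjTranspose,
      ← Matrix.conjTranspose_pow, Matrix.trace_conjTranspose]
    rfl
  have hQP : HaarTrace.E μ (HaarTrace.Q (2 * j) * HaarTrace.P (2 * j)) = 2 * j := by
    have := HaarTrace.E_QQ_P μ (2 * j) (by omega) (by omega) {2 * j}
      (by intro i hi; simp at hi; omega) (by simp)
    simpa [HaarTrace.QQ] using this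
  obtain ⟨z, hz1, hz2⟩ : ∃ z : ℂ, z * star z = 1 ∧ z ^ (2 * j) = Complex.I := by
    have hj' : (j : ℂ) ≠ 0 := by exact_mod_cast hj.ne'
    refine ⟨Complex.exp (((Real.pi / (4 * j) : ℝ) : ℂ) * Complex.I), ?_, ?_⟩
    · have : star (Complex.exp (((Real.pi / (4 * j) : ℝ) : ℂ) * Complex.I)) =
        Complex.exp (-(((Real.pi / (4 * j) : ℝ) : ℂ) * Complex.I)) := by
        rw [Complex.star_def, ← Complex.exp_conj]
        congr 1
        rw [map_mul, Complex.conj_ofReal, Complex.conj_I, mul_neg]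
      rw [this, ← Complex.exp_add]
      simp
    · rw [← Complex.exp_nat_mul, show ((2 * j : ℕ) : ℂ) *
        (((Real.pi / (4 * j) : ℝ) : ℂ) * Complex.I) = Real.pi / 2 * Complex.I by
          push_cast
          field_simp
          ring, Complex.exp_pi_div_two_mul_I]
  have hPs : ∀ M N : Matrix.unitaryGroup (Fin n) ℂ, (N : Matrix (Fin n) (Fin n) ℂ) =
      z • (M : Matrix (Fin n) (Fin n) ℂ) →
      HaarTrace.P (2 * j) N = Complex.I * HaarTrace.P (2 * j) M := by
    intro M N hN
    simp [HaarTrace.P, hN, smul_pow, hz2]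
  have hQs : ∀ M N : Matrix.unitaryGroup (Fin n) ℂ, (N : Matrix (Fin n) (Fin n) ℂ) =
      z • (M : Matrix (Fin n) (Fin n) ℂ) →
      HaarTrace.Q (2 * j) N = -Complex.I * HaarTrace.Q (2 * j) M := by
    intro M N hN
    rw [← hS, ← hS, hT, hT, hPs M N hN, map_mul, Complex.conj_I]
  have hI : Complex.I ≠ 1 := fun h => by simpa using congrArg Complex.re h
  have hI' : -Complex.I ≠ 1 := fun h => by simpa using congrArg Complex.re h
  have hm1 : (-1 : ℂ) ≠ 1 := by norm_num
  have e1 := HaarTrace.E_scale μ (HaarTrace.P (2 * j)) z _ hz1 hI hPs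
  have e2 := HaarTrace.E_scale μ (HaarTrace.Q (2 * j)) z _ hz1 hI' hQs
  have e3 := HaarTrace.E_scale μ (HaarTrace.P (2 * j) * HaarTrace.P (2 * j)) z _ hz1 hm1
    (fun M N h => by
      simp only [ContinuousMap.mul_apply, hPs M N h]
      linear_combination (HaarTrace.P (2 * j) M) ^ 2 * Complex.I_sq)
  have e4 := HaarTrace.E_scale μ (HaarTrace.Q (2 * j) * HaarTrace.Q (2 * j)) z _ hz1 hm1
    (fun M N h => by
      simp only [ContinuousMap.mul_apply, hQs M N h]
      linear_combination (HaarTrace.Q (2 * j) M) ^ 2 * Complex.I_sq)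
  constructor
  · have : HaarTrace.E μ (HaarTrace.P (2 * j) + HaarTrace.Q (2 * j)) = 0 := by
      rw [map_add, e1, e2, add_zero]
    simp only [hS]
    simp only [hT]
    exact this
  · have : HaarTrace.E μ ((HaarTrace.P (2 * j) + HaarTrace.Q (2 * j)) ^ 2) = 4 * j := by
      rw [show ((HaarTrace.P (2 * j) + HaarTrace.Q (2 * j)) ^ 2 :
        C(Matrix.unitaryGroup (Fin n) ℂ, ℂ)) = HaarTrace.P (2 * j) * HaarTrace.P (2 * j) +
        HaarTrace.Q (2 * j) * HaarTrace.Q (2 * j) +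
        (HaarTrace.Q (2 * j) * HaarTrace.P (2 * j) +
          HaarTrace.Q (2 * j) * HaarTrace.P (2 * j)) by ring,
        map_add, map_add, map_add, e3, e4, hQP]
      ring
    simp only [hS]
    simp only [hT]
    exact this
end

section
/- Let n and j be positive integers with 4j ≤ n − 1, let M be distributed according to the Haar probability measure on SO(n,ℝ), and set W = Tr(M^j)/√j if j is odd and W = (Tr(M^j) − 1)/√j if j is even. Then the first four moments of W match those of a standard normal random variable: E[W] = 0, E[W²] = 1, E[W³] = 0, and E[W⁴] = 3. -/
open MeasureTheory ProbabilityTheory Matrix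

/-- The special orthogonal group `SO(n,ℝ)`: real orthogonal `n × n` matrices of
determinant `1`, as a subgroup of the orthogonal group. -/
def SO (n : ℕ) : Subgroup (Matrix.orthogonalGroup (Fin n) ℝ) where
  carrier := {M | Matrix.det (M : Matrix (Fin n) (Fin n) ℝ) = 1}
  mul_mem' := by
    intro a b ha hb
    simp only [Set.mem_setOf_eq, Matrix.UnitaryGroup.mul_val, Matrix.det_mul] at *
    rw [ha, hb, mul_one]
  one_mem' := by
    simp only [Set.mem_setOf_eq, Matrix.UnitaryGroup.one_val, Matrix.det_one]
  inv_mem' := by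
    intro a ha
    simp only [Set.mem_setOf_eq, Matrix.UnitaryGroup.inv_val] at *
    rw [Matrix.star_eq_conjTranspose, Matrix.det_conjTranspose, ha, star_one]

/-- The trace of the `k`-th power (`k : ℤ`, negative powers via the inverse) of an
element of `SO(n,ℝ)`. -/
noncomputable def trSO {n : ℕ} (M : SO n) (k : ℤ) : ℝ :=
  Matrix.trace (((M ^ k : SO n) : Matrix.orthogonalGroup (Fin n) ℝ) :
    Matrix (Fin n) (Fin n) ℝ)

/-! ### Algebraic part: the model functional -/

namespace SOMoments

/-- Mean of the model variable with index `k` (index `0` is the constant `c`). -/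
noncomputable def eta (c : ℝ) (k : ℕ) : ℝ := if k = 0 then c else if Even k then 1 else 0

/-- Moments of a Gaussian variable with mean `eta c k` and variance `k`. -/
noncomputable def mom (c : ℝ) (k : ℕ) : ℕ → ℝ
  | 0 => 1
  | 1 => eta c k
  | (r + 2) => eta c k * mom c k (r + 1) + k * (r + 1) * mom c k r

/-- The absolute difference of natural numbers. -/
def ad (a b : ℕ) : ℕ := (a - b) + (b - a)

/-- The model expectation. -/
noncomputable def Lf (c : ℝ) : MvPolynomial ℕ ℝ →ₗ[ℝ] ℝ :=
  (MvPolynomial.basisMonomials ℕ ℝ).constr ℝ (fun s => s.prod (fun k r => mom c k r))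

/-- The quadratic part of the loop operator. -/
noncomputable def Qp (j : ℕ) : MvPolynomial ℕ ℝ :=
  ∑ i ∈ Finset.Ico 1 j, (MvPolynomial.X i * MvPolynomial.X (j - i) - MvPolynomial.X (ad (2 * i) j))

/-- The derivation part of the loop operator. -/
noncomputable def Dp (j : ℕ) : Derivation ℝ (MvPolynomial ℕ ℝ) (MvPolynomial ℕ ℝ) :=
  MvPolynomial.mkDerivation ℝ
    (fun k => (k : ℝ) • (MvPolynomial.X (j + k) - MvPolynomial.X (ad j k)))

/-- The loop operator. -/
noncomputable def Fp (c : ℝ) (j : ℕ) (G : MvPolynomial ℕ ℝ) : MvPolynomial ℕ ℝ :=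
  (c - 1) • (MvPolynomial.X j * G) + Qp j * G + Dp j G

open MvPolynomial

lemma Lf_monomial (c : ℝ) (s : ℕ →₀ ℕ) (a : ℝ) :
    Lf c (monomial s a) = a * s.prod (fun k r => mom c k r) := by
  have : monomial s a = a • (basisMonomials ℕ ℝ) s := by
    simp [smul_monomial]
  rw [this, map_smul, Lf, Module.Basis.constr_basis, smul_eq_mul]

lemma Lf_one (c : ℝ) : Lf c 1 = 1 := by
  have := Lf_monomial c 0 1
  simpa using this

lemma mom_succ (c : ℝ) (k r : ℕ) :
    mom c k (r + 1) = eta c k * mom c k r + k * r * mom c k (r - 1) := by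
  cases r with
  | zero => simp [mom]
  | succ r => simp [mom]

lemma Lf_ibp (c : ℝ) (j : ℕ) (G : MvPolynomial ℕ ℝ) :
    Lf c (X j * G) = eta c j * Lf c G + j * Lf c (pderiv j G) := by
  induction G using MvPolynomial.induction_on' with
  | monomial s a =>
    have e1 : X j * monomial s a = monomial (s + Finsupp.single j 1) a := by
      rw [X, monomial_mul, one_mul, add_comm]
    rw [e1, pderiv_monomial, Lf_monomial, Lf_monomial, Lf_monomial]
    have h0 : ∀ k, mom c k 0 = 1 := fun k => by simp [mom]
    rw [← Finsupp.mul_prod_erase' (s + Finsupp.single j 1) j _ h0,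
      ← Finsupp.mul_prod_erase' s j _ h0,
      ← Finsupp.mul_prod_erase' (s - Finsupp.single j 1) j _ h0]
    have e2 : Finsupp.erase j (s + Finsupp.single j 1) = Finsupp.erase j s := by
      ext k; by_cases hk : k = j
      · simp [hk]
      · simp [Finsupp.erase_ne hk, Finsupp.single_apply, Ne.symm hk]
    have e3 : Finsupp.erase j (s - Finsupp.single j 1) = Finsupp.erase j s := by
      ext k; by_cases hk : k = j
      · simp [hk]
      · simp [Finsupp.erase_ne hk, Finsupp.single_apply, Ne.symm hk]
    rw [e2, e3]
    simp only [Finsupp.add_apply, Finsupp.single_eq_same, mom_succ, Finsupp.tsub_apply]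
    ring
  | add p q hp hq =>
    rw [mul_add, map_add, map_add, map_add, map_add, hp, hq]; ring

lemma Lf_X0 (c : ℝ) (G : MvPolynomial ℕ ℝ) : Lf c (X 0 * G) = c * Lf c G := by
  rw [Lf_ibp]; simp [eta]

lemma Lf_X (c : ℝ) (j : ℕ) : Lf c (X j) = eta c j := by
  have := Lf_ibp c j 1
  simpa [Lf_one] using this

lemma sum_ad (j l : ℕ) (hl : 0 < l) :
    ∑ i ∈ Finset.Ico 1 j, (if ad (2 * i) j = l then (1 : ℝ) else 0) =
      if l < j ∧ Even (j + l) then 2 else 0 := by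
  rw [← Finset.sum_filter, Finset.sum_const, nsmul_one]
  split_ifs with h
  · obtain ⟨h1, h2⟩ := h
    have : Finset.filter (fun i => ad (2 * i) j = l) (Finset.Ico 1 j) =
        {(j - l) / 2, (j + l) / 2} := by
      ext i
      rw [Finset.mem_filter, Finset.mem_Ico, Finset.mem_insert, Finset.mem_singleton]
      unfold ad
      rw [Nat.even_iff] at h2
      omega
    rw [this, Finset.card_pair]
    · norm_num
    · rw [Nat.even_iff] at h2
      omega
  · have : Finset.filter (fun i => ad (2 * i) j = l) (Finset.Ico 1 j) = ∅ := by
      ext i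
      rw [Finset.mem_filter, Finset.mem_Ico]
      unfold ad
      rw [Nat.even_iff] at h
      simp only [Finset.notMem_empty, iff_false]
      omega
    simp [this]

lemma pderiv_Qp (j l : ℕ) (hl : 0 < l) :
    pderiv l (Qp j) = (if l < j then (2 : ℝ) • X (j - l) else 0) -
      C (if l < j ∧ Even (j + l) then (2 : ℝ) else 0) := by
  have e1 : ∀ i ∈ Finset.Ico 1 j, pderiv l (X i * X (j - i) - X (ad (2 * i) j) :
      MvPolynomial ℕ ℝ) = (if i = l then X (j - l) else 0) + (if i = j - l then X (j - l) else 0)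
        - C (if ad (2 * i) j = l then (1 : ℝ) else 0) := by
    intro i hi
    rw [Finset.mem_Ico] at hi
    have hx : ∀ m, pderiv l (X m : MvPolynomial ℕ ℝ) = if m = l then 1 else 0 := by
      intro m
      split_ifs with h
      · rw [h, pderiv_X_self]
      · rw [pderiv_X_of_ne h]
    rw [map_sub, pderiv_mul, hx, hx, hx]
    have h3 : (j - i = l) ↔ (i = j - l) := by omega
    simp only [h3]
    have h4 : i = j - l → j - l = i := fun h => h.symm
    congr 1
    · have c1 : (X i * (if i = j - l then 1 else 0) : MvPolynomial ℕ ℝ) =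
          if i = j - l then X (j - l) else 0 := by
        split_ifs with h
        · rw [h, mul_one]
        · rw [mul_zero]
      have c2 : ((if i = l then 1 else 0) * X (j - i) : MvPolynomial ℕ ℝ) =
          if i = l then X (j - l) else 0 := by
        split_ifs with h
        · rw [h, one_mul]
        · rw [zero_mul]
      rw [c1, c2]
    · split_ifs <;> simp
  rw [Qp, map_sum, Finset.sum_congr rfl e1, Finset.sum_sub_distrib, Finset.sum_add_distrib,
    ← map_sum, sum_ad j l hl, Finset.sum_ite_eq', Finset.sum_ite_eq']
  congr 1
  by_cases h : l < j
  · have h1 : l ∈ Finset.Ico 1 j := by simp; omega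
    have h2 : j - l ∈ Finset.Ico 1 j := by simp; omega
    simp only [h, h1, h2, if_true, two_smul]
  · have h1 : l ∉ Finset.Ico 1 j := by simp; omega
    have h2 : j - l ∉ Finset.Ico 1 j := by simp; omega
    simp only [h, h1, h2, if_false, add_zero]

lemma comm_Dp (j l : ℕ) (hj : 0 < j) (hl : 0 < l) (G : MvPolynomial ℕ ℝ) :
    pderiv l (Dp j G) = Dp j (pderiv l G) + (((l - j : ℕ) : ℝ) • pderiv (l - j) G -
      ((j + l : ℕ) : ℝ) • pderiv (j + l) G - ((j - l : ℕ) : ℝ) • pderiv (j - l) G) := by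
  have hx : ∀ l m, pderiv l (X m : MvPolynomial ℕ ℝ) = if m = l then 1 else 0 := by
    intro l m
    split_ifs with h
    · rw [h, pderiv_X_self]
    · rw [pderiv_X_of_ne h]
  have key : ⁅(pderiv l : Derivation ℝ (MvPolynomial ℕ ℝ) (MvPolynomial ℕ ℝ)), Dp j⁆ = (((l - j : ℕ) : ℝ) • pderiv (l - j) -
      ((j + l : ℕ) : ℝ) • pderiv (j + l) - ((j - l : ℕ) : ℝ) • pderiv (j - l) :
      Derivation ℝ (MvPolynomial ℕ ℝ) (MvPolynomial ℕ ℝ)) := by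
    apply derivation_ext
    intro k
    rw [Derivation.commutator_apply]
    have h0 : Dp j (pderiv l (X k)) = 0 := by
      rw [hx]; split_ifs <;> simp
    rw [h0, Dp, mkDerivation_X]
    simp only [Derivation.sub_apply, Derivation.smul_apply, Derivation.map_smul, map_sub, hx, ad,
      sub_zero]
    rcases Nat.lt_trichotomy l j with h | h | h
    · have e1 : (l - j : ℕ) = 0 := by omega
      have a1 : ¬ (j + k = l) := by omega
      have a2 : ((j - k) + (k - j) = l) ↔ (k = j + l ∨ k = j - l) := by omega
      have a3 : ¬ (j + l = j - l) := by omega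
      simp only [e1, a1, a2, if_false]
      by_cases b1 : k = j + l
      · simp [b1, a3]
      · by_cases b2 : k = j - l
        · subst b2; simp [b1]
        · simp [b1, b2]
    · subst h
      have a1 : (l + k = l) ↔ k = 0 := by omega
      have a2 : ((l - k) + (k - l) = l) ↔ (k = l + l ∨ k = 0) := by omega
      simp only [a1, a2]
      by_cases b1 : k = l + l
      · have : ¬ (l + l = 0) := by omega
        have h' : ¬ (l = 0) := by omega
        simp [b1, h']
      · by_cases b2 : k = 0
        · subst b2; simp [b1]
        · simp [b1, b2]
    · have e1 : (j - l : ℕ) = 0 := by omega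
      have a1 : (j + k = l) ↔ k = l - j := by omega
      have a2 : ((j - k) + (k - j) = l) ↔ (k = j + l) := by omega
      simp only [e1, a1, a2]
      by_cases b1 : k = j + l
      · have : ¬ (j + l = l - j) := by omega
        simp [b1, this]
      · by_cases b2 : k = l - j
        · subst b2; simp [b1]
        · simp [b1, b2]
  have := congrArg (fun D => D G) key
  simp only [Derivation.commutator_apply, Derivation.sub_apply, Derivation.smul_apply] at this
  rw [← this]; ring

lemma eta_pos (c : ℝ) {k : ℕ} (hk : k ≠ 0) : eta c k = if Even k then 1 else 0 := by
  simp [eta, hk]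

lemma Lf_step (c : ℝ) (j l : ℕ) (hj : 0 < j) (G : MvPolynomial ℕ ℝ) :
    Lf c (Fp c j (X l * G)) = eta c l * Lf c (Fp c j G) + l * Lf c (Fp c j (pderiv l G)) := by
  have e1 : Fp c j (X l * G) = X l * Fp c j G + (l : ℝ) • ((X (j + l) - X (ad j l)) * G) := by
    have : Dp j (X l) = (l : ℝ) • (X (j + l) - X (ad j l)) := by rw [Dp, mkDerivation_X]
    simp only [Fp, Derivation.leibniz, this, smul_eq_mul, smul_eq_C_mul]
    ring
  rw [e1, map_add, Lf_ibp]
  rcases Nat.eq_zero_or_pos l with rfl | hl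
  · simp
  have e2 : pderiv l (Fp c j G) = Fp c j (pderiv l G) + ((c - 1) * (if j = l then 1 else 0)) • G
      + pderiv l (Qp j) * G + (((l - j : ℕ) : ℝ) • pderiv (l - j) G -
      ((j + l : ℕ) : ℝ) • pderiv (j + l) G - ((j - l : ℕ) : ℝ) • pderiv (j - l) G) := by
    have hx : pderiv l (X j : MvPolynomial ℕ ℝ) = if j = l then 1 else 0 := by
      split_ifs with h
      · rw [h, pderiv_X_self]
      · rw [pderiv_X_of_ne h]
    simp only [Fp, map_add, Derivation.map_smul, pderiv_mul, comm_Dp j l hj hl, hx]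
    split_ifs <;> simp only [smul_eq_C_mul, mul_one, mul_zero, map_zero] <;> ring
  have e3 : Lf c (((c - 1) * (if j = l then 1 else 0)) • G
      + pderiv l (Qp j) * G + (((l - j : ℕ) : ℝ) • pderiv (l - j) G -
      ((j + l : ℕ) : ℝ) • pderiv (j + l) G - ((j - l : ℕ) : ℝ) • pderiv (j - l) G))
      + Lf c ((X (j + l) - X (ad j l)) * G) = 0 := by
    have h1 : pderiv l (Qp j) * G = (if l < j then (2 : ℝ) else 0) • (X (j - l) * G) -
      (if l < j ∧ Even (j + l) then (2 : ℝ) else 0) • G := by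
      rw [pderiv_Qp j l hl, sub_mul, ← smul_eq_C_mul]
      split_ifs <;> simp [smul_eq_C_mul, mul_assoc]
    rw [h1]
    simp only [map_add, map_sub, map_smul, sub_mul, smul_eq_mul, Lf_ibp]
    have hjl : eta c (j + l) = if Even (j + l) then 1 else 0 := eta_pos c (by omega)
    rcases Nat.lt_trichotomy l j with h | h | h
    · have a1 : ad j l = j - l := by unfold ad; omega
      have a2 : l - j = 0 := by omega
      have a3 : eta c (j - l) = if Even (j + l) then 1 else 0 := by
        rw [eta_pos c (by omega)]
        simp only [Nat.even_sub h.le, Nat.even_add]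
      have a4 : j ≠ l := by omega
      rw [a1, a2, a3, hjl]
      simp only [h, a4, true_and, if_true, if_false]
      push_cast
      split_ifs <;> ring
    · subst h
      have a1 : ad l l = 0 := by unfold ad; omega
      rw [a1, hjl]
      simp [eta]
      ring
    · have a1 : ad j l = l - j := by unfold ad; omega
      have a2 : j - l = 0 := by omega
      have a3 : eta c (l - j) = if Even (j + l) then 1 else 0 := by
        rw [eta_pos c (by omega)]
        simp only [Nat.even_sub h.le, Nat.even_add]
        congr 1
        simp only [eq_iff_iff]; tauto
      have a4 : j ≠ l := by omega
      have a5 : ¬ l < j := by omega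
      rw [a1, a2, a3, hjl]
      simp only [a5, a4, false_and, if_false]
      push_cast
      ring
  rw [e2]
  simp only [map_add, map_smul, smul_eq_mul] at e3 ⊢
  linear_combination (l : ℝ) * e3

lemma sum_even (m : ℕ) (hm : 0 < m) :
    ∑ i ∈ Finset.Ico 1 (2 * m), (if Even i then (1 : ℝ) else 0) = m - 1 := by
  induction m, hm using Nat.le_induction with
  | base => simp
  | succ m hm ih =>
    rw [show 2 * (m + 1) = 2 * m + 1 + 1 by ring, Finset.sum_Ico_succ_top (by omega),
      Finset.sum_Ico_succ_top (by omega), ih]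
    simp [Nat.even_add_one]

lemma Lf_base (c : ℝ) (j : ℕ) (hj : 0 < j) : Lf c (Fp c j 1) = 0 := by
  have h1 : Lf c (Fp c j 1) = (c - 1) * eta c j + ∑ i ∈ Finset.Ico 1 j,
      (eta c i * eta c (j - i) + (if j = 2 * i then (i : ℝ) else 0) - eta c (ad (2 * i) j)) := by
    simp only [Fp, Qp, mul_one, map_add, map_smul, smul_eq_mul, Lf_X, Derivation.map_one_eq_zero,
      map_zero, add_zero, map_sum]
    congr 1
    apply Finset.sum_congr rfl
    intro i hi
    rw [Finset.mem_Ico] at hi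
    rw [map_sub, Lf_ibp, Lf_X, Lf_X]
    congr 2
    split_ifs with h
    · rw [show j - i = i by omega, pderiv_X_self, Lf_one, mul_one]
    · rw [pderiv_X_of_ne (by omega), map_zero, mul_zero]
  rw [h1]
  rcases Nat.even_or_odd' j with ⟨m, rfl | rfl⟩
  · have e : ∀ i ∈ Finset.Ico 1 (2 * m),
      (eta c i * eta c (2 * m - i) + (if 2 * m = 2 * i then (i : ℝ) else 0)
        - eta c (ad (2 * i) (2 * m))) = (if Even i then 1 else 0) + (if m = i then (m : ℝ) else 0)
        - (1 + if m = i then c - 1 else 0) := by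
      intro i hi
      rw [Finset.mem_Ico] at hi
      rw [eta_pos c (by omega : i ≠ 0), eta_pos c (by omega : 2 * m - i ≠ 0)]
      have h2 : Even (2 * m - i) ↔ Even i := by
        rw [Nat.even_sub (by omega)]; simp
      have h3 : (2 * m = 2 * i) ↔ m = i := by omega
      simp only [h2, h3]
      have h4 : eta c (ad (2 * i) (2 * m)) = 1 + if m = i then c - 1 else 0 := by
        split_ifs with h
        · subst h; simp [ad, eta]
        · rw [eta_pos c (by unfold ad; omega), if_pos, add_zero]
          unfold ad; rw [Nat.even_iff]; omega
      rw [h4]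
      by_cases h : m = i
      · subst h; by_cases h' : Even m <;> simp [h']
      · by_cases h' : Even i <;> simp [h, h']
    rw [Finset.sum_congr rfl e, Finset.sum_sub_distrib, Finset.sum_add_distrib,
      Finset.sum_add_distrib, sum_even m (by omega), Finset.sum_ite_eq, Finset.sum_ite_eq,
      eta_pos c (by omega)]
    have hm : m ∈ Finset.Ico 1 (2 * m) := by rw [Finset.mem_Ico]; omega
    simp only [hm, if_true, Finset.sum_const, Nat.card_Ico, even_two_mul, nsmul_one]
    rw [Nat.cast_sub (by omega)]
    push_cast
    ring
  · rw [eta_pos c (by omega), Finset.sum_eq_zero]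
    · simp
    · intro i hi
      rw [Finset.mem_Ico] at hi
      rw [eta_pos c (by omega : i ≠ 0), eta_pos c (by omega : 2 * m + 1 - i ≠ 0),
        eta_pos c (by unfold ad; omega)]
      have h5 : ¬ (2 * m + 1 = 2 * i) := by omega
      have h6 : ¬ Even (ad (2 * i) (2 * m + 1)) := by
        unfold ad; rw [Nat.even_iff]; omega
      by_cases h7 : Even i
      · have : ¬ Even (2 * m + 1 - i) := by rw [Nat.even_iff] at *; omega
        simp [h5, h6, this]
      · simp [h5, h6, h7]

lemma Lf_loop_monomial (c : ℝ) (j : ℕ) (hj : 0 < j) (N : ℕ) :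
    ∀ s : ℕ →₀ ℕ, s.degree ≤ N → Lf c (Fp c j (monomial s 1)) = 0 := by
  induction N with
  | zero =>
    intro s hs
    have : s = 0 := by
      rw [← Finsupp.degree_eq_zero_iff]; omega
    subst this
    exact Lf_base c j hj
  | succ N ih =>
    intro s hs
    by_cases h0 : s = 0
    · subst h0; exact Lf_base c j hj
    obtain ⟨l, hl⟩ := Finsupp.support_nonempty_iff.mpr h0
    rw [Finsupp.mem_support_iff] at hl
    have hs' : Finsupp.single l 1 + (s - Finsupp.single l 1) = s := by
      ext k
      by_cases hk : l = k
      · subst hk; simp; omega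
      · simp [Finsupp.single_apply, hk]
    set s' := s - Finsupp.single l 1 with hs'd
    have hd : s'.degree + 1 = s.degree := by
      rw [← hs', map_add, Finsupp.degree_single, add_comm]
    have e : monomial s (1 : ℝ) = X l * monomial s' 1 := by
      rw [X, monomial_mul, one_mul, hs']
    rw [e, Lf_step c j l hj, ih s' (by omega), pderiv_monomial, one_mul]
    have e2 : Fp c j (monomial (s' - Finsupp.single l 1) ((s' l : ℕ) : ℝ)) =
        ((s' l : ℕ) : ℝ) • Fp c j (monomial (s' - Finsupp.single l 1) 1) := by
      have : monomial (s' - Finsupp.single l 1) ((s' l : ℕ) : ℝ) =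
        ((s' l : ℕ) : ℝ) • monomial (s' - Finsupp.single l 1) (1 : ℝ) := by
        simp [smul_monomial]
      rw [this]
      simp only [Fp, Derivation.map_smul]
      simp only [smul_eq_C_mul]
      ring
    have hle : (s' - Finsupp.single l 1).degree ≤ N := by
      have : s' - Finsupp.single l 1 ≤ s' := tsub_le_self
      have := Finsupp.degree_mono this
      omega
    rw [e2, map_smul, ih _ hle]
    simp

lemma Lf_loop (c : ℝ) (j : ℕ) (hj : 0 < j) (G : MvPolynomial ℕ ℝ) :
    Lf c (Fp c j G) = 0 := by
  induction G using MvPolynomial.induction_on' with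
  | monomial s a =>
    have : monomial s a = a • monomial s (1 : ℝ) := by simp [smul_monomial]
    have e2 : Fp c j (monomial s a) = a • Fp c j (monomial s 1) := by
      rw [this]
      simp only [Fp, Derivation.map_smul]
      simp only [smul_eq_C_mul]
      ring
    rw [e2, map_smul, Lf_loop_monomial c j hj _ s le_rfl, smul_zero]
  | add p q hp hq =>
    have : Fp c j (p + q) = Fp c j p + Fp c j q := by
      simp only [Fp, map_add, smul_eq_C_mul]; ring
    rw [this, map_add, hp, hq, add_zero]

lemma Lf_pow (c : ℝ) (j : ℕ) (hj : 0 < j) :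
    Lf c (X j) = eta c j ∧ Lf c (X j ^ 2) = eta c j ^ 2 + j ∧
    Lf c (X j ^ 3) = eta c j ^ 3 + 3 * j * eta c j ∧
    Lf c (X j ^ 4) = eta c j ^ 4 + 6 * j * eta c j ^ 2 + 3 * j ^ 2 := by
  have h : ∀ r : ℕ, Lf c (X j ^ r) = mom c j r := by
    intro r
    rw [X_pow_eq_monomial, Lf_monomial, one_mul, Finsupp.prod_single_index]
    simp [mom]
  refine ⟨Lf_X c j, ?_, ?_, ?_⟩ <;> rw [h] <;> simp [mom] <;> ring

end SOMoments

/-! ### Uniqueness of the solution of the loop equations in low degree -/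

namespace SOMoments

open MvPolynomial

/-- The monomial attached to a list of indices. -/
noncomputable def xp (l : List ℕ) : MvPolynomial ℕ ℝ := (l.map X).prod

lemma xp_cons (k : ℕ) (l : List ℕ) : xp (k :: l) = X k * xp l := by simp [xp]

lemma xp_append (l l' : List ℕ) : xp (l ++ l') = xp l * xp l' := by simp [xp]

lemma xp_perm {l l' : List ℕ} (h : l.Perm l') : xp l = xp l' := (h.map X).prod_eq

lemma zeros (c : ℝ) (Φ : MvPolynomial ℕ ℝ →ₗ[ℝ] ℝ) (h0 : ∀ G, Φ (X 0 * G) = c * Φ G) (d : ℕ)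
    (hp : ∀ l : List ℕ, (∀ i ∈ l, 0 < i) → l.sum = d → Φ (xp l) = 0) (N : ℕ) :
    ∀ l : List ℕ, l.length ≤ N → l.sum = d → Φ (xp l) = 0 := by
  induction N with
  | zero =>
    intro l hl hs
    have : l = [] := List.length_eq_zero_iff.mp (by omega)
    subst this
    exact hp _ (by simp) hs
  | succ N ih =>
    intro l hl hs
    by_cases h : 0 ∈ l
    · have hperm := List.perm_cons_erase h
      rw [xp_perm hperm, xp_cons, h0, ih, mul_zero]
      · have := hperm.length_eq
        simp only [List.length_cons] at this
        omega
      · have := hperm.sum_eq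
        simp only [List.sum_cons] at this
        omega
    · refine hp l (fun i hi => ?_) hs
      rcases Nat.eq_zero_or_pos i with h' | h'
      · subst h'; exact absurd hi h
      · exact h'

lemma Dp_bound (Φ : MvPolynomial ℕ ℝ →ₗ[ℝ] ℝ) (d : ℕ) (S : ℝ)
    (hlow : ∀ l : List ℕ, l.sum < d → Φ (xp l) = 0)
    (hS : ∀ l : List ℕ, (∀ i ∈ l, 0 < i) → l.sum = d → |Φ (xp l)| ≤ S)
    (j : ℕ) (hj : 0 < j) (B : List ℕ) :
    ∀ A : List ℕ, (∀ i ∈ A, 0 < i) → (∀ i ∈ B, 0 < i) → A.sum + j + B.sum = d →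
      |Φ (xp A * Dp j (xp B))| ≤ S * B.sum := by
  induction B with
  | nil => intro A _ _ _; simp [xp]
  | cons k B ih =>
    intro A hA hB hs
    simp only [List.sum_cons] at hs
    have hk : 0 < k := hB k (by simp)
    have hB' : ∀ i ∈ B, 0 < i := fun i hi => hB i (by simp [hi])
    have e : xp A * Dp j (xp (k :: B)) = xp (k :: A) * Dp j (xp B) +
        (k : ℝ) • (xp ((j + k) :: (A ++ B)) - xp (ad j k :: (A ++ B))) := by
      have : Dp j (X k) = (k : ℝ) • (X (j + k) - X (ad j k)) := by rw [Dp, mkDerivation_X]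
      simp only [xp_cons, xp_append, Derivation.leibniz, this, smul_eq_mul, smul_eq_C_mul]
      ring
    have h1 := ih (k :: A) (by
      intro i hi
      rcases List.mem_cons.mp hi with rfl | hi
      · exact hk
      · exact hA i hi) hB' (by simp only [List.sum_cons]; omega)
    have h2 := hS ((j + k) :: (A ++ B)) (by
      intro i hi
      rcases List.mem_cons.mp hi with rfl | hi
      · omega
      · rcases List.mem_append.mp hi with hi | hi
        · exact hA i hi
        · exact hB' i hi) (by simp only [List.sum_cons, List.sum_append]; omega)
    have h3 := hlow (ad j k :: (A ++ B)) (by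
      simp only [List.sum_cons, List.sum_append, ad]; omega)
    rw [e, map_add, map_smul, map_sub, h3, sub_zero, smul_eq_mul]
    calc |Φ (xp (k :: A) * Dp j (xp B)) + k * Φ (xp ((j + k) :: (A ++ B)))|
        ≤ |Φ (xp (k :: A) * Dp j (xp B))| + |k * Φ (xp ((j + k) :: (A ++ B)))| := abs_add_le _ _
      _ ≤ S * B.sum + k * S := by
          rw [abs_mul, Nat.abs_cast]
          gcongr
      _ = S * ((k :: B).sum : ℕ) := by
          simp only [List.sum_cons]; push_cast; ring

lemma uniq (c : ℝ) (Φ : MvPolynomial ℕ ℝ →ₗ[ℝ] ℝ) (h1 : Φ 1 = 0)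
    (h0 : ∀ G, Φ (X 0 * G) = c * Φ G)
    (hF : ∀ j : ℕ, 0 < j → ∀ G, Φ (Fp c j G) = 0) (d : ℕ) :
    (d : ℝ) + 1 ≤ c → ∀ l : List ℕ, l.sum = d → Φ (xp l) = 0 := by
  induction d using Nat.strong_induction_on with
  | _ d ih =>
  intro hd l hl
  have hlow : ∀ l : List ℕ, l.sum < d → Φ (xp l) = 0 := by
    intro l hl
    refine ih l.sum hl ?_ l rfl
    have : ((l.sum : ℕ) : ℝ) ≤ d := by exact_mod_cast hl.le
    linarith
  refine zeros c Φ h0 d ?_ l.length l le_rfl hl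
  clear hl l
  obtain ⟨m, -, hm⟩ := Finset.exists_max_image (Finset.univ : Finset (Composition d))
    (fun m => |Φ (xp m.blocks)|) Finset.univ_nonempty
  set S := |Φ (xp m.blocks)| with hSd
  have hS : ∀ l : List ℕ, (∀ i ∈ l, 0 < i) → l.sum = d → |Φ (xp l)| ≤ S := by
    intro l hl hs
    exact hm ⟨l, fun {i} hi => hl i hi, hs⟩ (Finset.mem_univ _)
  suffices hS0 : S ≤ 0 by
    intro l hl hs
    have := hS l hl hs
    exact abs_nonpos_iff.mp (this.trans hS0)
  have hmp : ∀ i ∈ m.blocks, 0 < i := fun i hi => m.blocks_pos hi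
  have hms := m.blocks_sum
  rcases hb : m.blocks with _ | ⟨j, G⟩
  · rw [hSd, hb]; simp [xp, h1]
  rw [hb] at hmp hms
  simp only [List.sum_cons] at hms
  have hj : 0 < j := hmp j (by simp)
  have hG : ∀ i ∈ G, 0 < i := fun i hi => hmp i (by simp [hi])
  have hD := Dp_bound Φ d S hlow hS j hj G [] (by simp) hG (by simp; omega)
  have hQ : |Φ (Qp j * xp G)| ≤ (j - 1 : ℕ) * S := by
    rw [Qp, Finset.sum_mul, map_sum]
    refine (Finset.abs_sum_le_sum_abs _ _).trans ?_
    have : ∀ i ∈ Finset.Ico 1 j, |Φ ((X i * X (j - i) - X (ad (2 * i) j)) * xp G)| ≤ S := by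
      intro i hi
      rw [Finset.mem_Ico] at hi
      have e : (X i * X (j - i) - X (ad (2 * i) j)) * xp G =
          xp (i :: (j - i) :: G) - xp (ad (2 * i) j :: G) := by
        simp only [xp_cons]; ring
      rw [e, map_sub, hlow (ad (2 * i) j :: G) (by simp only [List.sum_cons, ad]; omega), sub_zero]
      apply hS
      · intro k hk
        rcases List.mem_cons.mp hk with rfl | hk
        · omega
        · rcases List.mem_cons.mp hk with rfl | hk
          · omega
          · exact hG k hk
      · simp only [List.sum_cons]; omega
    refine (Finset.sum_le_card_nsmul _ _ _ this).trans ?_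
    simp
  have hloop := hF j hj (xp G)
  rw [Fp, map_add, map_add, map_smul, smul_eq_mul, ← xp_cons, ← hb] at hloop
  have hd0 : (0 : ℝ) ≤ d := Nat.cast_nonneg d
  have hx : (c - 1) * S ≤ (j - 1 : ℕ) * S + S * (G.sum : ℕ) := by
    have e : (c - 1) * Φ (xp m.blocks) = - (Φ (Qp j * xp G) + Φ (Dp j (xp G))) := by
      linarith
    have e2 : (c - 1) * S = |(c - 1) * Φ (xp m.blocks)| := by
      rw [abs_mul, abs_of_nonneg (by linarith : (0 : ℝ) ≤ c - 1)]
    rw [e2, e, abs_neg]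
    refine (abs_add_le _ _).trans (add_le_add hQ ?_)
    simpa [xp] using hD
  have hds : ((j - 1 : ℕ) : ℝ) + (G.sum : ℕ) + 1 = d := by
    have : (j - 1) + G.sum + 1 = d := by omega
    exact_mod_cast this
  by_contra hneg
  push Not at hneg
  nlinarith

end SOMoments

/-! ### Analysis on `SO n` -/

namespace SOMoments

instance borelMat (n : ℕ) : BorelSpace (Matrix (Fin n) (Fin n) ℝ) :=
  inferInstanceAs (BorelSpace (Fin n → Fin n → ℝ))

instance borelO (n : ℕ) : BorelSpace (Matrix.orthogonalGroup (Fin n) ℝ) :=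
  Subtype.borelSpace _

instance borelSO (n : ℕ) : BorelSpace (SO n) :=
  Subtype.borelSpace _

instance sccMat (n : ℕ) : SecondCountableTopology (Matrix (Fin n) (Fin n) ℝ) :=
  inferInstanceAs (SecondCountableTopology (Fin n → Fin n → ℝ))

instance sccO (n : ℕ) : SecondCountableTopology (Matrix.orthogonalGroup (Fin n) ℝ) :=
  TopologicalSpace.Subtype.secondCountableTopology _

instance sccSO (n : ℕ) : SecondCountableTopology (SO n) :=
  TopologicalSpace.Subtype.secondCountableTopology _

/-- The underlying matrix. -/
def mat {n : ℕ} (M : SO n) : Matrix (Fin n) (Fin n) ℝ :=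
  ((M : Matrix.orthogonalGroup (Fin n) ℝ) : Matrix (Fin n) (Fin n) ℝ)

lemma mat_mul {n : ℕ} (M N : SO n) : mat (M * N) = mat M * mat N := rfl

lemma mat_one {n : ℕ} : mat (1 : SO n) = 1 := rfl

lemma mat_inj {n : ℕ} {M N : SO n} (h : mat M = mat N) : M = N :=
  Subtype.ext (Subtype.ext h)

lemma mat_pow {n : ℕ} (M : SO n) (k : ℕ) : mat (M ^ k) = mat M ^ k := by
  induction k with
  | zero => simp [mat_one]
  | succ k ih => rw [pow_succ, pow_succ, mat_mul, ih]

lemma continuous_mat {n : ℕ} : Continuous (mat : SO n → Matrix (Fin n) (Fin n) ℝ) :=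
  continuous_subtype_val.comp continuous_subtype_val

lemma mat_tr {n : ℕ} (M : SO n) : (mat M)ᵀ * mat M = 1 := by
  have := (Matrix.mem_orthogonalGroup_iff' (Fin n) ℝ).mp (M : Matrix.orthogonalGroup (Fin n) ℝ).2
  simpa [mat, Matrix.star_eq_conjTranspose] using this

lemma mat_tr' {n : ℕ} (M : SO n) : mat M * (mat M)ᵀ = 1 :=
  mul_eq_one_comm.mp (mat_tr M)

lemma mat_det {n : ℕ} (M : SO n) : (mat M).det = 1 := M.2

/-- Construct an element of `SO n`. -/
def mkSO {n : ℕ} (A : Matrix (Fin n) (Fin n) ℝ) (h : Aᵀ * A = 1) (hd : A.det = 1) : SO n :=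
  ⟨⟨A, (Matrix.mem_orthogonalGroup_iff' (Fin n) ℝ).mpr
    (by simpa [Matrix.star_eq_conjTranspose] using h)⟩, hd⟩

instance compactSO (n : ℕ) : CompactSpace (SO n) := by
  have hemb : Topology.IsEmbedding (mat : SO n → Matrix (Fin n) (Fin n) ℝ) :=
    Topology.IsEmbedding.subtypeVal.comp Topology.IsEmbedding.subtypeVal
  rw [← isCompact_univ_iff, hemb.isCompact_iff]
  have hrange : mat '' (Set.univ : Set (SO n)) = {A | Aᵀ * A = 1 ∧ A.det = 1} := by
    ext A
    constructor
    · rintro ⟨M, -, rfl⟩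
      exact ⟨mat_tr M, mat_det M⟩
    · rintro ⟨h1, h2⟩
      exact ⟨mkSO A h1 h2, trivial, rfl⟩
  rw [hrange]
  have hcl : IsClosed {A : Matrix (Fin n) (Fin n) ℝ | Aᵀ * A = 1 ∧ A.det = 1} := by
    apply IsClosed.inter
    · exact isClosed_eq (by fun_prop) continuous_const
    · exact isClosed_eq (by fun_prop) continuous_const
  have hK : IsCompact (Set.univ.pi fun _ : Fin n => Set.univ.pi fun _ : Fin n =>
      Set.Icc (-1 : ℝ) 1) :=
    isCompact_univ_pi fun _ => isCompact_univ_pi fun _ => isCompact_Icc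
  refine IsCompact.of_isClosed_subset (X := Matrix (Fin n) (Fin n) ℝ) hK hcl ?_
  rintro A ⟨h1, -⟩
  intro a _ b _
  have h3 := congrFun (congrFun h1 b) b
  rw [Matrix.mul_apply, Matrix.one_apply_eq] at h3
  have h4 : A a b * A a b ≤ 1 := by
    rw [← h3]
    exact Finset.single_le_sum (f := fun x => Aᵀ b x * A x b)
      (fun x _ => mul_self_nonneg (A x b)) (Finset.mem_univ a)
  exact ⟨by nlinarith, by nlinarith⟩

lemma integrable_cont {n : ℕ} (μ : Measure (SO n)) [IsProbabilityMeasure μ] {f : SO n → ℝ}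
    (hf : Continuous f) : Integrable f μ := by
  have := hf.continuousOn.integrableOn_compact (μ := μ) isCompact_univ
  simpa using this

lemma integral_deriv_zero {n : ℕ} (μ : Measure (SO n)) [IsProbabilityMeasure μ]
    [μ.IsMulLeftInvariant] (R : ℝ → SO n) (hR0 : R 0 = 1) (hR : ∀ s t, R (s + t) = R s * R t)
    (f f' : SO n → ℝ) (hf : Continuous f) (hf' : Continuous f')
    (hd : ∀ M, HasDerivAt (fun t => f (R t * M)) (f' M) 0) : ∫ M, f' M ∂μ = 0 := by
  obtain ⟨C, hC⟩ := isCompact_univ.exists_bound_of_continuousOn (hf'.continuousOn (s := Set.univ))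
  have key := hasDerivAt_integral_of_dominated_loc_of_deriv_le (μ := μ)
    (F := fun t M => f (R t * M)) (F' := fun t M => f' (R t * M)) (x₀ := (0 : ℝ))
    (s := Set.univ) (bound := fun _ => C) Filter.univ_mem
    (Filter.Eventually.of_forall fun t =>
      (hf.comp (continuous_const.mul continuous_id)).aestronglyMeasurable)
    (integrable_cont μ (hf.comp (continuous_const.mul continuous_id)))
    ((hf'.comp (continuous_const.mul continuous_id)).aestronglyMeasurable)
    (Filter.Eventually.of_forall fun M t _ => hC _ trivial)
    (integrable_const C)
    (Filter.Eventually.of_forall fun M t _ => by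
      have h1 := hd (R t * M)
      have h2 : HasDerivAt (fun s => f (R (s - t) * (R t * M))) (f' (R t * M)) t := by
        have h3 : HasDerivAt (fun s : ℝ => s - t) 1 t := (hasDerivAt_id t).sub_const t
        have h1' : HasDerivAt (fun t_1 => f (R t_1 * (R t * M))) (f' (R t * M)) (t - t) := by
          rw [sub_self]; exact h1
        have h5 := HasDerivAt.comp (h := fun s : ℝ => s - t) t h1' h3
        rw [mul_one] at h5
        exact h5
      have h4 : (fun s => f (R (s - t) * (R t * M))) = fun s => f (R s * M) := by
        funext s
        rw [← mul_assoc, ← hR, sub_add_cancel]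
      rw [h4] at h2
      exact h2)
  have h1 := key.2
  have h2 : (fun t : ℝ => ∫ M, f (R t * M) ∂μ) = fun _ => ∫ M, f M ∂μ := by
    funext t
    exact integral_mul_left_eq_self f (R t)
  rw [h2] at h1
  have h3 := h1.unique (hasDerivAt_const (0 : ℝ) _)
  simpa [hR0] using h3

lemma exp_skew_tr {n : ℕ} (X : Matrix (Fin n) (Fin n) ℝ) (hX : Xᵀ = -X) :
    (NormedSpace.exp X)ᵀ * NormedSpace.exp X = 1 := by
  rw [← Matrix.exp_transpose, hX, ← Matrix.exp_add_of_commute _ _ ((Commute.refl X).neg_left)]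
  simp

lemma exp_skew_det {n : ℕ} (X : Matrix (Fin n) (Fin n) ℝ) (hX : Xᵀ = -X) :
    (NormedSpace.exp X).det = 1 := by
  have h : X = (1 / 2 : ℝ) • X + (1 / 2 : ℝ) • X := by
    rw [← add_smul]; norm_num
  have h2 := exp_skew_tr ((1 / 2 : ℝ) • X) (by rw [Matrix.transpose_smul, hX, smul_neg])
  have h3 := congrArg Matrix.det h2
  rw [Matrix.det_mul, Matrix.det_transpose, Matrix.det_one] at h3
  rw [h, Matrix.exp_add_of_commute _ _ (Commute.refl _), Matrix.det_mul, h3]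

/-- The one-parameter group generated by a skew matrix. -/
noncomputable def rot {n : ℕ} (X : Matrix (Fin n) (Fin n) ℝ) (hX : Xᵀ = -X) (t : ℝ) : SO n :=
  mkSO (NormedSpace.exp (t • X))
    (exp_skew_tr _ (by rw [Matrix.transpose_smul, hX, smul_neg]))
    (exp_skew_det _ (by rw [Matrix.transpose_smul, hX, smul_neg]))

lemma mat_rot {n : ℕ} (X : Matrix (Fin n) (Fin n) ℝ) (hX : Xᵀ = -X) (t : ℝ) :
    mat (rot X hX t) = NormedSpace.exp (t • X) := rfl

lemma rot_zero {n : ℕ} (X : Matrix (Fin n) (Fin n) ℝ) (hX : Xᵀ = -X) : rot X hX 0 = 1 := by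
  apply mat_inj
  rw [mat_rot, mat_one, zero_smul, NormedSpace.exp_zero]

lemma rot_add {n : ℕ} (X : Matrix (Fin n) (Fin n) ℝ) (hX : Xᵀ = -X) (s t : ℝ) :
    rot X hX (s + t) = rot X hX s * rot X hX t := by
  apply mat_inj
  rw [mat_mul, mat_rot, mat_rot, mat_rot, add_smul, Matrix.exp_add_of_commute]
  exact ((Commute.refl X).smul_left _).smul_right _

section
open scoped Matrix.Norms.Operator

lemma hasDerivAt_pow_entry {n : ℕ} (X : Matrix (Fin n) (Fin n) ℝ) (M : Matrix (Fin n) (Fin n) ℝ)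
    (k : ℕ) (a b : Fin n) :
    HasDerivAt (fun t : ℝ => ((NormedSpace.exp (t • X) * M) ^ k) a b)
      ((∑ i ∈ Finset.range k, M ^ (k - 1 - i) * (X * M) * M ^ i) a b) 0 := by
  have h1 := hasDerivAt_exp_smul_const X (0 : ℝ)
  have h2 := (h1.mul_const M).fun_pow' k
  simp only [zero_smul, NormedSpace.exp_zero, one_mul, Nat.pred_eq_sub_one] at h2
  have h3 := ((Matrix.entryLinearMap ℝ ℝ a b).toContinuousLinearMap.hasFDerivAt).comp_hasDerivAt
    (0 : ℝ) h2
  exact h3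

end

end SOMoments

/-! ### The loop equations for the Haar measure -/

namespace SOMoments

open MvPolynomial

/-- Evaluation of a polynomial at the power traces of `M`. -/
noncomputable def ev {n : ℕ} (M : SO n) : MvPolynomial ℕ ℝ →ₐ[ℝ] ℝ :=
  aeval (fun k => Matrix.trace (mat M ^ k))

/-- The derivation giving the derivative along `X` at `M`. -/
noncomputable def dl {n : ℕ} (X : Matrix (Fin n) (Fin n) ℝ) (M : SO n) :
    Derivation ℝ (MvPolynomial ℕ ℝ) (MvPolynomial ℕ ℝ) :=
  mkDerivation ℝ (fun k => C (k * Matrix.trace (X * mat M ^ k)))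

lemma ev_X {n : ℕ} (M : SO n) (k : ℕ) : ev M (X k) = Matrix.trace (mat M ^ k) := by
  simp [ev]

lemma ev_C {n : ℕ} (M : SO n) (a : ℝ) : ev M (C a) = a := by
  simp [ev]

lemma ev_dl_mul {n : ℕ} (Y : Matrix (Fin n) (Fin n) ℝ) (M : SO n) (p : MvPolynomial ℕ ℝ) (k : ℕ) :
    ev M (dl Y M (p * X k)) = ev M p * (k * Matrix.trace (Y * mat M ^ k)) +
      ev M (dl Y M p) * Matrix.trace (mat M ^ k) := by
  have : dl Y M (X k) = C (k * Matrix.trace (Y * mat M ^ k)) := by rw [dl, mkDerivation_X]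
  rw [Derivation.leibniz, this, smul_eq_mul, smul_eq_mul, map_add, map_mul (ev M), map_mul (ev M), ev_C, ev_X]
  ring

lemma continuous_ev {n : ℕ} (G : MvPolynomial ℕ ℝ) : Continuous (fun M : SO n => ev M G) := by
  have hm := continuous_mat (n := n)
  induction G using MvPolynomial.induction_on with
  | C a => simp only [ev_C]; exact continuous_const
  | add p q hp hq => simp only [map_add]; exact hp.add hq
  | mul_X p k hp =>
    simp only [map_mul, ev_X]
    exact hp.mul ((hm.pow k).matrix_trace)

lemma continuous_ev_dl {n : ℕ} (Y : Matrix (Fin n) (Fin n) ℝ) (G : MvPolynomial ℕ ℝ) :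
    Continuous (fun M : SO n => ev M (dl Y M G)) := by
  have hm := continuous_mat (n := n)
  induction G using MvPolynomial.induction_on with
  | C a => simp only [derivation_C, map_zero]; exact continuous_const
  | add p q hp hq => simp only [map_add]; exact hp.add hq
  | mul_X p k hp =>
    simp only [ev_dl_mul]
    exact ((continuous_ev p).mul (continuous_const.mul
      ((continuous_const.mul (hm.pow k)).matrix_trace))).add (hp.mul ((hm.pow k).matrix_trace))

lemma hasDerivAt_trace {n : ℕ} (Y : Matrix (Fin n) (Fin n) ℝ) (M : Matrix (Fin n) (Fin n) ℝ)
    (k : ℕ) :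
    HasDerivAt (fun t : ℝ => Matrix.trace ((NormedSpace.exp (t • Y) * M) ^ k))
      (k * Matrix.trace (Y * M ^ k)) 0 := by
  have h := HasDerivAt.fun_sum (u := Finset.univ) fun (a : Fin n) _ =>
    hasDerivAt_pow_entry Y M k a a
  have e : ∑ a : Fin n, (∑ i ∈ Finset.range k, M ^ (k - 1 - i) * (Y * M) * M ^ i) a a =
      k * Matrix.trace (Y * M ^ k) := by
    change Matrix.trace (∑ i ∈ Finset.range k, M ^ (k - 1 - i) * (Y * M) * M ^ i) = _
    rw [Matrix.trace_sum]
    have : ∀ i ∈ Finset.range k, Matrix.trace (M ^ (k - 1 - i) * (Y * M) * M ^ i) =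
        Matrix.trace (Y * M ^ k) := by
      intro i hi
      rw [Finset.mem_range] at hi
      rw [mul_assoc, Matrix.trace_mul_comm, mul_assoc, mul_assoc, ← pow_add,
        ← pow_succ']
      congr 3
      omega
    rw [Finset.sum_congr rfl this]
    simp
  rw [e] at h
  exact h

lemma hasDerivAt_ev {n : ℕ} (Y : Matrix (Fin n) (Fin n) ℝ) (hY : Yᵀ = -Y) (M : SO n)
    (G : MvPolynomial ℕ ℝ) :
    HasDerivAt (fun t : ℝ => ev (rot Y hY t * M) G) (ev M (dl Y M G)) 0 := by
  induction G using MvPolynomial.induction_on with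
  | C a => simp only [ev_C, derivation_C, map_zero]; exact hasDerivAt_const _ _
  | add p q hp hq => simp only [map_add]; exact hp.add hq
  | mul_X p k hp =>
    have h := hp.mul (hasDerivAt_trace Y (mat M) k)
    simp only [map_mul, ev_X, ev_dl_mul, mat_mul, mat_rot]
    simp only [rot_zero, one_mul, zero_smul, NormedSpace.exp_zero] at h
    rw [add_comm]
    exact h

/-- The standard basis of skew matrices. -/
def sk {n : ℕ} (a b : Fin n) : Matrix (Fin n) (Fin n) ℝ :=
  Matrix.single a b 1 - Matrix.single b a 1

lemma sk_tr {n : ℕ} (a b : Fin n) : (sk a b : Matrix (Fin n) (Fin n) ℝ)ᵀ = - sk a b := by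
  simp [sk, Matrix.transpose_sub, Matrix.transpose_single]

lemma entry_single {n : ℕ} (A B : Matrix (Fin n) (Fin n) ℝ) (x y a b : Fin n) :
    (A * Matrix.single x y 1 * B : Matrix (Fin n) (Fin n) ℝ) a b = A a x * B y b := by
  simp [Matrix.mul_apply, Matrix.single_apply, Finset.sum_ite_eq, ite_and]

lemma sum_sk {n : ℕ} (A B : Matrix (Fin n) (Fin n) ℝ) :
    ∑ a, ∑ b, (A * sk a b * B : Matrix (Fin n) (Fin n) ℝ) a b =
      Matrix.trace A * Matrix.trace B - Matrix.trace (A * Bᵀ) := by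
  have : ∀ a b, (A * sk a b * B : Matrix (Fin n) (Fin n) ℝ) a b = A a a * B b b - A a b * Bᵀ b a := by
    intro a b
    rw [sk, mul_sub, sub_mul, Matrix.sub_apply, entry_single, entry_single, Matrix.transpose_apply]
  simp only [this, Finset.sum_sub_distrib]
  congr 1
  rw [Matrix.trace, Matrix.trace, Finset.sum_mul_sum]
  rfl

lemma trace_sk {n : ℕ} (a b : Fin n) (N : Matrix (Fin n) (Fin n) ℝ) :
    Matrix.trace (sk a b * N) = N b a - N a b := by
  rw [sk, sub_mul, Matrix.trace_sub]
  congr 1 <;> simp [Matrix.trace, Matrix.mul_apply, Matrix.single_apply, ite_and]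

lemma trace_pow_tr {n : ℕ} (M : SO n) (i k : ℕ) :
    Matrix.trace (mat M ^ i * (mat M ^ k)ᵀ) = Matrix.trace (mat M ^ ad i k) := by
  have hone : ∀ b, mat M ^ b * (mat M ^ b)ᵀ = 1 := by
    intro b
    rw [← mat_pow]; exact mat_tr' _
  rcases le_total i k with h | h
  · obtain ⟨m, rfl⟩ := Nat.exists_eq_add_of_le h
    have : ad i (i + m) = m := by unfold ad; omega
    rw [this, add_comm i m, pow_add, Matrix.transpose_mul, ← mul_assoc, hone, one_mul,
      Matrix.trace_transpose]
  · obtain ⟨m, rfl⟩ := Nat.exists_eq_add_of_le h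
    have : ad (k + m) k = m := by unfold ad; omega
    rw [this, add_comm k m, pow_add, mul_assoc, hone, mul_one]

lemma sum_ev_dl {n : ℕ} (M : SO n) (j : ℕ) (G : MvPolynomial ℕ ℝ) :
    ∑ a, ∑ b, (mat M ^ j) a b * ev M (dl (sk a b) M G) = ev M (Dp j G) := by
  induction G using MvPolynomial.induction_on with
  | C a => simp [derivation_C]
  | add p q hp hq =>
    simp only [map_add, mul_add, Finset.sum_add_distrib, hp, hq]
  | mul_X p k hp =>
    have hX : ∑ a, ∑ b, (mat M ^ j) a b * (k * Matrix.trace (sk a b * mat M ^ k)) =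
        ev M (Dp j (X k)) := by
      rw [Dp, mkDerivation_X, map_smul, map_sub, ev_X, ev_X, ← trace_pow_tr, pow_add,
        smul_eq_mul]
      simp only [trace_sk]
      simp only [Matrix.trace, Matrix.diag, Matrix.mul_apply, Matrix.transpose_apply]
      rw [← Finset.sum_sub_distrib, Finset.mul_sum]
      refine Finset.sum_congr rfl fun a _ => ?_
      rw [← Finset.sum_sub_distrib, Finset.mul_sum]
      refine Finset.sum_congr rfl fun b _ => ?_
      ring
    rw [Derivation.leibniz, smul_eq_mul, smul_eq_mul, map_add, map_mul, map_mul, ← hX, ← hp, ev_X]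
    simp only [ev_dl_mul, Finset.mul_sum, ← Finset.sum_add_distrib]
    refine Finset.sum_congr rfl fun a _ => Finset.sum_congr rfl fun b _ => ?_
    ring

lemma sum_entry {n : ℕ} (M : SO n) (j : ℕ) (hj : 0 < j) :
    ∑ a, ∑ b, (∑ i ∈ Finset.range j,
      mat M ^ (j - 1 - i) * (sk a b * mat M) * mat M ^ i : Matrix (Fin n) (Fin n) ℝ) a b =
      ev M (((n : ℝ) - 1) • X j + Qp j) := by
  have e1 : ∀ a b : Fin n, (∑ i ∈ Finset.range j,
      mat M ^ (j - 1 - i) * (sk a b * mat M) * mat M ^ i : Matrix (Fin n) (Fin n) ℝ) a b =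
      ∑ i ∈ Finset.range j, (mat M ^ i * sk a b * mat M ^ (j - i) : Matrix (Fin n) (Fin n) ℝ) a b := by
    intro a b
    rw [Matrix.sum_apply, ← Finset.sum_range_reflect]
    refine Finset.sum_congr rfl fun i hi => ?_
    rw [Finset.mem_range] at hi
    rw [show j - 1 - (j - 1 - i) = i by omega, mul_assoc, mul_assoc, ← pow_succ', ← mul_assoc,
      show j - 1 - i + 1 = j - i by omega]
  have e2 : ∑ a : Fin n, ∑ b : Fin n, ∑ i ∈ Finset.range j,
      (mat M ^ i * sk a b * mat M ^ (j - i) : Matrix (Fin n) (Fin n) ℝ) a b = ∑ i ∈ Finset.range j,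
        ∑ a : Fin n, ∑ b : Fin n, (mat M ^ i * sk a b * mat M ^ (j - i) : Matrix (Fin n) (Fin n) ℝ) a b := by
    rw [Finset.sum_comm]
    rw [Finset.sum_congr rfl fun b _ => Finset.sum_comm]
    rw [Finset.sum_comm]
    exact Finset.sum_congr rfl fun i _ => Finset.sum_comm
  simp only [e1]
  rw [e2]
  simp only [sum_sk, trace_pow_tr]
  rw [Finset.range_eq_Ico, Finset.sum_eq_sum_Ico_succ_bot hj, Qp, map_add, map_smul, map_sum, ev_X]
  congr 1
  · have : ad 0 (j - 0) = j := by unfold ad; omega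
    rw [this]
    simp
    ring
  · refine Finset.sum_congr rfl fun i hi => ?_
    rw [Finset.mem_Ico] at hi
    have : ad i (j - i) = ad (2 * i) j := by unfold ad; omega
    rw [map_sub, map_mul, ev_X, ev_X, ev_X, this]

lemma loop_eq {n : ℕ} (μ : Measure (SO n)) [IsProbabilityMeasure μ] [μ.IsMulLeftInvariant]
    (j : ℕ) (hj : 0 < j) (G : MvPolynomial ℕ ℝ) : ∫ M, ev M (Fp n j G) ∂μ = 0 := by
  have hm := continuous_mat (n := n)
  have hent : ∀ (N : SO n → Matrix (Fin n) (Fin n) ℝ), Continuous N → ∀ a b,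
      Continuous fun M => N M a b := fun N hN a b => hN.matrix_elem a b
  let f' : Fin n → Fin n → SO n → ℝ := fun a b M =>
    (∑ i ∈ Finset.range j, mat M ^ (j - 1 - i) * (sk a b * mat M) * mat M ^ i : Matrix (Fin n) (Fin n) ℝ) a b * ev M G +
      (mat M ^ j) a b * ev M (dl (sk a b) M G)
  have hc : ∀ a b, Continuous (f' a b) := by
    intro a b
    refine ((hent _ ?_ a b).mul (continuous_ev G)).add
      ((hent _ (hm.pow j) a b).mul (continuous_ev_dl _ G))
    exact continuous_finsetSum _ fun i _ =>
      ((hm.pow _).mul (continuous_const.mul hm)).mul (hm.pow _)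
  have hz : ∀ a b, ∫ M, f' a b M ∂μ = 0 := by
    intro a b
    refine integral_deriv_zero μ (rot (sk a b) (sk_tr a b)) (rot_zero _ _) (rot_add _ _)
      (fun M => (mat M ^ j) a b * ev M G) (f' a b)
      ((hent _ (hm.pow j) a b).mul (continuous_ev G)) (hc a b) ?_
    intro M
    have h := (hasDerivAt_pow_entry (sk a b) (mat M) j a b).mul
      (hasDerivAt_ev (sk a b) (sk_tr a b) M G)
    simp only [rot_zero, one_mul, zero_smul, NormedSpace.exp_zero] at h
    exact h
  have hs : ∀ M, ev M (Fp n j G) = ∑ a, ∑ b, f' a b M := by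
    intro M
    simp only [f', Finset.sum_add_distrib, ← Finset.sum_mul]
    rw [sum_entry M j hj, sum_ev_dl, Fp, ← map_mul, ← map_add]
    congr 2
    rw [add_mul, smul_mul_assoc]
  simp only [hs]
  rw [integral_finsetSum _ fun a _ => integrable_cont μ
    (continuous_finsetSum _ fun b _ => hc a b)]
  refine Finset.sum_eq_zero fun a _ => ?_
  rw [integral_finsetSum _ fun b _ => integrable_cont μ (hc a b)]
  exact Finset.sum_eq_zero fun b _ => hz a b

lemma moments {n : ℕ} (μ : Measure (SO n)) [IsProbabilityMeasure μ] [μ.IsMulLeftInvariant]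
    (l : List ℕ) (hl : l.sum + 1 ≤ n) : ∫ M, ev M (xp l) ∂μ = Lf n (xp l) := by
  let E : MvPolynomial ℕ ℝ →ₗ[ℝ] ℝ :=
    { toFun := fun G => ∫ M, ev M G ∂μ
      map_add' := fun p q => by
        simp only [map_add]
        exact integral_add (integrable_cont μ (continuous_ev p)) (integrable_cont μ (continuous_ev q))
      map_smul' := fun a p => by
        simp only [map_smul, smul_eq_mul, RingHom.id_apply]
        exact integral_const_mul _ _ }
  have hE : ∀ G, E G = ∫ M, ev M G ∂μ := fun G => rfl
  have h := uniq n (E - Lf n) (by rw [LinearMap.sub_apply, Lf_one, hE]; simp) (by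
    intro G
    rw [LinearMap.sub_apply, LinearMap.sub_apply, Lf_X0, hE, hE]
    simp only [map_mul, ev_X, pow_zero, Matrix.trace_one, Fintype.card_fin]
    rw [integral_const_mul]; ring) (by
    intro j hj G
    rw [LinearMap.sub_apply, Lf_loop n j hj, hE, loop_eq μ j hj, sub_zero])
    l.sum (by exact_mod_cast hl) l rfl
  rw [LinearMap.sub_apply, hE] at h
  linarith

lemma moments_pow {n : ℕ} (μ : Measure (SO n)) [IsProbabilityMeasure μ] [μ.IsMulLeftInvariant]
    (j r : ℕ) (hl : r * j + 1 ≤ n) :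
    ∫ M, (Matrix.trace (mat M ^ j)) ^ r ∂μ = Lf n (X j ^ r) := by
  have h := moments μ (List.replicate r j) (by simpa using hl)
  have e : xp (List.replicate r j) = X j ^ r := by simp [xp]
  rw [e] at h
  simpa [ev_X] using h

end SOMoments

/-- For `4j ≤ n − 1` and Haar-distributed `M` in `SO(n,ℝ)`, the first four moments of
`W = Tr(M^j)/√j` (`j` odd) or `W = (Tr(M^j) − 1)/√j` (`j` even) match those of a
standard normal: `E[W] = 0`, `E[W²] = 1`, `E[W³] = 0`, `E[W⁴] = 3`. -/
theorem so_four_moments (n j : ℕ) (hn : 0 < n) (hj : 0 < j) (h : 4 * j ≤ n - 1)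
    (μ : Measure (SO n)) [IsProbabilityMeasure μ] [μ.IsHaarMeasure]
    (W : SO n → ℝ)
    (hW : W = fun M => if Odd j then trSO M j / Real.sqrt j
      else (trSO M j - 1) / Real.sqrt j) :
    (∫ M, W M ∂μ = 0) ∧ (∫ M, (W M) ^ 2 ∂μ = 1) ∧
      (∫ M, (W M) ^ 3 ∂μ = 0) ∧ (∫ M, (W M) ^ 4 ∂μ = 3) := by
  have hjr : (0 : ℝ) < j := by exact_mod_cast hj
  obtain ⟨l1, l2, l3, l4⟩ := SOMoments.Lf_pow (n : ℝ) j hj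
  set e := SOMoments.eta (n : ℝ) j with he
  have hec : e = if Odd j then 0 else 1 := by
    rw [he, SOMoments.eta_pos _ (by omega)]
    by_cases ho : Odd j
    · rw [if_pos ho, if_neg (Nat.not_even_iff_odd.mpr ho)]
    · rw [if_neg ho, if_pos (Nat.not_odd_iff_even.mp ho)]
  let T : SO n → ℝ := fun M => Matrix.trace (SOMoments.mat M ^ j)
  have hT : Continuous T := ((SOMoments.continuous_mat (n := n)).pow j).matrix_trace
  have hWT : ∀ M, W M = (T M - e) / Real.sqrt j := by
    intro M
    have : trSO M j = T M := by
      simp only [T, ← SOMoments.mat_pow, trSO, zpow_natCast]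
      rfl
    rw [hW, hec]
    simp only [this]
    split_ifs <;> simp
  have m1 : ∫ M, T M ∂μ = e := by
    have := SOMoments.moments_pow μ j 1 (by omega)
    simp only [pow_one] at this
    rw [← l1, ← this]
  have m2 : ∫ M, T M ^ 2 ∂μ = _ := (SOMoments.moments_pow μ j 2 (by omega)).trans l2
  have m3 : ∫ M, T M ^ 3 ∂μ = _ := (SOMoments.moments_pow μ j 3 (by omega)).trans l3
  have m4 : ∫ M, T M ^ 4 ∂μ = _ := (SOMoments.moments_pow μ j 4 (by omega)).trans l4
  have i1 : Integrable T μ := SOMoments.integrable_cont μ hT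
  have i2 : Integrable (fun M => T M ^ 2) μ := SOMoments.integrable_cont μ (hT.pow 2)
  have i3 : Integrable (fun M => T M ^ 3) μ := SOMoments.integrable_cont μ (hT.pow 3)
  have i4 : Integrable (fun M => T M ^ 4) μ := SOMoments.integrable_cont μ (hT.pow 4)
  have gen : ∀ a b c d f : ℝ,
      ∫ M, (a * T M ^ 4 + b * T M ^ 3 + c * T M ^ 2 + d * T M + f) ∂μ =
        a * (∫ M, T M ^ 4 ∂μ) + b * (∫ M, T M ^ 3 ∂μ) + c * (∫ M, T M ^ 2 ∂μ) +
          d * (∫ M, T M ∂μ) + f := by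
    intro a b c d f
    rw [integral_add, integral_add, integral_add, integral_add, integral_const_mul,
      integral_const_mul, integral_const_mul, integral_const_mul, integral_const]
    · simp
    all_goals apply SOMoments.integrable_cont; fun_prop
  have hs2 : Real.sqrt j ^ 2 = j := Real.sq_sqrt hjr.le
  have hs4 : Real.sqrt j ^ 4 = (j : ℝ) ^ 2 := by
    rw [show Real.sqrt j ^ 4 = (Real.sqrt j ^ 2) ^ 2 by ring, hs2]
  simp only [hWT, div_pow, integral_div]
  have k1 : ∫ M, (T M - e) ∂μ = 0 := by
    have := gen 0 0 0 1 (-e)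
    rw [m1] at this
    calc _ = _ := integral_congr_ae (Filter.Eventually.of_forall fun M => by ring)
      _ = _ := this
      _ = 0 := by ring
  have k2 : ∫ M, (T M - e) ^ 2 ∂μ = j := by
    have := gen 0 0 1 (-2 * e) (e ^ 2)
    rw [m1, m2] at this
    calc _ = _ := integral_congr_ae (Filter.Eventually.of_forall fun M => by ring)
      _ = _ := this
      _ = _ := by ring
  have k3 : ∫ M, (T M - e) ^ 3 ∂μ = 0 := by
    have := gen 0 1 (-3 * e) (3 * e ^ 2) (-e ^ 3)
    rw [m1, m2, m3] at this
    calc _ = _ := integral_congr_ae (Filter.Eventually.of_forall fun M => by ring)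
      _ = _ := this
      _ = _ := by ring
  have k4 : ∫ M, (T M - e) ^ 4 ∂μ = 3 * j ^ 2 := by
    have := gen 1 (-4 * e) (6 * e ^ 2) (-4 * e ^ 3) (e ^ 4)
    rw [m1, m2, m3, m4] at this
    calc _ = _ := integral_congr_ae (Filter.Eventually.of_forall fun M => by ring)
      _ = _ := this
      _ = _ := by ring
  rw [k1, k2, k3, k4, hs2, hs4]
  refine ⟨by simp, ?_, by simp, ?_⟩ <;> field_simp
end

section
/- Let n and j be positive integers with 4j ≤ 2n + 1, let M be distributed according to the Haar probability measure on USp(2n,ℂ), and set W = Tr(M^j)/√j if j is odd and W = (Tr(M^j) + 1)/√j if j is even. Then the first four moments of W match those of a standard normal random variable: E[W] = 0, E[W²] = 1, E[W³] = 0, and E[W⁴] = 3. -/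
open MeasureTheory ProbabilityTheory Matrix

/-- The compact symplectic group `USp(2n,ℂ)`: the `2n × 2n` complex unitary matrices `M`
with `M * J * Mᵀ = J`, where `J` is the `2n × 2n` block matrix `[[0, I], [−I, 0]]`
(equivalently, `Matrix.symplecticGroup`, whose defining matrix is `−J`; the two
conditions `M * J * Mᵀ = J` and `M * (−J) * Mᵀ = −J` are equivalent),
as a subgroup of the unitary group. -/
def USp (n : ℕ) : Subgroup (Matrix.unitaryGroup (Fin n ⊕ Fin n) ℂ) where
  carrier :=
    {M | (M : Matrix (Fin n ⊕ Fin n) (Fin n ⊕ Fin n) ℂ) ∈ Matrix.symplecticGroup (Fin n) ℂ}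
  mul_mem' := by
    intro a b ha hb
    simp only [Set.mem_setOf_eq, Matrix.UnitaryGroup.mul_val] at *
    exact mul_mem ha hb
  one_mem' := by
    simp only [Set.mem_setOf_eq, Matrix.UnitaryGroup.one_val]
    exact one_mem _
  inv_mem' := by
    intro M hM
    simp only [Set.mem_setOf_eq, Matrix.UnitaryGroup.inv_val] at *
    have h1 : (star (M : Matrix (Fin n ⊕ Fin n) (Fin n ⊕ Fin n) ℂ)) =
        (M : Matrix (Fin n ⊕ Fin n) (Fin n ⊕ Fin n) ℂ)⁻¹ :=
      (Matrix.inv_eq_left_inv (Matrix.UnitaryGroup.star_mul_self M)).symm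
    rw [h1, SymplecticGroup.inv_eq_symplectic_inv _ hM]
    exact mul_mem (mul_mem (SymplecticGroup.neg_mem (SymplecticGroup.J_mem _ _))
      (SymplecticGroup.transpose_mem hM)) (SymplecticGroup.J_mem _ _)

/-- The trace of the `k`-th power (`k : ℤ`, negative powers via the inverse) of an
element of `USp(2n,ℂ)`. -/
noncomputable def trUSp {n : ℕ} (M : USp n) (k : ℤ) : ℂ :=
  Matrix.trace (((M ^ k : USp n) : Matrix.unitaryGroup (Fin n ⊕ Fin n) ℂ) :
    Matrix (Fin n ⊕ Fin n) (Fin n ⊕ Fin n) ℂ)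

/-- Absolute difference of natural numbers. -/
def absd (a b : ℕ) : ℕ := (a - b) + (b - a)

/-- The abstract loop equations for a function on multisets of natural numbers. -/
def LoopEq (F : Multiset ℕ → ℂ) : Prop :=
  ∀ k : ℕ, 1 ≤ k → ∀ S : Multiset ℕ,
    ∑ i ∈ Finset.range k, (F (i ::ₘ (k - i) ::ₘ S) + F (absd k (2 * i) ::ₘ S)) +
      (S.map fun l : ℕ => (l : ℂ) * (F ((k + l) ::ₘ S.erase l) - F (absd k l ::ₘ S.erase l))).sum = 0

/-- Uniqueness of solutions of the loop equations (vanishing form), by a maximum principle. -/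
theorem loop_vanish (n : ℕ) (F : Multiset ℕ → ℂ) (hE : F 0 = 0)
    (h0 : ∀ S, F (0 ::ₘ S) = 2 * n * F S) (hL : LoopEq F) :
    ∀ d : ℕ, d ≤ 2 * n + 1 → ∀ S : Multiset ℕ, S.sum = d → F S = 0 := by
  intro d
  induction d using Nat.strong_induction_on with
  | _ d ih =>
  intro hd
  -- reduce to positive multisets
  suffices hpos : ∀ S : Multiset ℕ, (∀ x ∈ S, 0 < x) → S.sum = d → F S = 0 by
    intro S
    induction hc : S.card using Nat.strong_induction_on generalizing S with
    | _ c ihc =>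
    intro hS
    by_cases hz : 0 ∈ S
    · obtain ⟨T, rfl⟩ := Multiset.exists_cons_of_mem hz
      rw [h0, ihc T.card (by rw [← hc]; simp) T rfl (by simpa using hS), mul_zero]
    · exact hpos S (fun x hx => Nat.pos_of_ne_zero (fun h => hz (h ▸ hx))) hS
  rcases Nat.eq_zero_or_pos d with rfl | hdpos
  · intro S hp hS
    have : S = 0 := by
      rw [Multiset.eq_zero_iff_forall_notMem]
      intro x hx
      have := Multiset.le_sum_of_mem hx
      have := hp x hx
      omega
    rw [this, hE]
  obtain ⟨π, -, hπ⟩ := Finset.exists_max_image (Finset.univ : Finset (Nat.Partition d))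
    (fun π => ‖F π.parts‖) ⟨default, Finset.mem_univ _⟩
  have hmax : ∀ S : Multiset ℕ, (∀ x ∈ S, 0 < x) → S.sum = d → ‖F S‖ ≤ ‖F π.parts‖ := by
    intro S hp hS
    exact hπ ⟨S, fun {x} hx => hp x hx, hS⟩ (Finset.mem_univ _)
  suffices hz : ‖F π.parts‖ = 0 by
    intro S hp hS
    have := hmax S hp hS
    rw [hz] at this
    exact norm_le_zero_iff.mp this
  set m := ‖F π.parts‖ with hm
  have hne : π.parts ≠ 0 := by
    intro h
    have := π.parts_sum
    rw [h] at this
    simp at this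
    omega
  obtain ⟨k, hk⟩ := Multiset.exists_mem_of_ne_zero hne
  obtain ⟨S, hS⟩ := Multiset.exists_cons_of_mem hk
  have hkpos : 0 < k := π.parts_pos hk
  have hSpos : ∀ x ∈ S, 0 < x := fun x hx => π.parts_pos (by rw [hS]; exact Multiset.mem_cons_of_mem hx)
  have hsum : k + S.sum = d := by
    have := π.parts_sum
    rw [hS] at this
    simpa using this
  have key := hL k hkpos S
  obtain ⟨k', rfl⟩ : ∃ k', k = k' + 1 := ⟨k - 1, by omega⟩
  rw [Finset.sum_range_succ'] at key
  have e0 : F (0 ::ₘ (k' + 1 - 0) ::ₘ S) + F (absd (k' + 1) (2 * 0) ::ₘ S)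
      = (2 * n + 1) * F π.parts := by
    rw [h0, hS]
    simp [absd]
    ring
  rw [e0] at key
  have b1 : ‖∑ i ∈ Finset.range k', (F ((i + 1) ::ₘ (k' + 1 - (i + 1)) ::ₘ S) +
      F (absd (k' + 1) (2 * (i + 1)) ::ₘ S))‖ ≤ k' * m := by
    refine (norm_sum_le_of_le _ (fun i hi => ?_)).trans (b := ∑ i ∈ Finset.range k', m) (by simp)
    rw [Finset.mem_range] at hi
    have : F (absd (k' + 1) (2 * (i + 1)) ::ₘ S) = 0 := by
      have hlt : (absd (k' + 1) (2 * (i + 1)) ::ₘ S).sum < d := by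
        simp only [Multiset.sum_cons, absd]
        omega
      exact ih _ hlt (by omega) _ rfl
    rw [this, add_zero]
    apply hmax
    · intro x hx
      simp only [Multiset.mem_cons] at hx
      rcases hx with rfl | rfl | hx
      · omega
      · omega
      · exact hSpos x hx
    · simp only [Multiset.sum_cons]
      omega
  have b2 : ‖(S.map fun l : ℕ => (l : ℂ) * (F ((k' + 1 + l) ::ₘ S.erase l) -
      F (absd (k' + 1) l ::ₘ S.erase l))).sum‖ ≤ (S.sum : ℝ) * m := by
    have h1 := norm_multiset_sum_le (S.map fun l : ℕ => (l : ℂ) * (F ((k' + 1 + l) ::ₘ S.erase l) -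
      F (absd (k' + 1) l ::ₘ S.erase l)))
    refine h1.trans ?_
    rw [Multiset.map_map]
    have h2 : (S.map fun l : ℕ => (l : ℝ) * m).sum = (S.sum : ℝ) * m := by
      rw [Multiset.sum_map_mul_right, Nat.cast_multiset_sum]
    rw [← h2]
    apply Multiset.sum_map_le_sum_map
    intro l hl
    obtain ⟨T, rfl⟩ := Multiset.exists_cons_of_mem hl
    have hlpos := hSpos l hl
    simp only [Multiset.sum_cons] at hsum
    have : F (absd (k' + 1) l ::ₘ (l ::ₘ T).erase l) = 0 := by
      have hlt : (absd (k' + 1) l ::ₘ (l ::ₘ T).erase l).sum < d := by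
        simp only [Multiset.sum_cons, Multiset.erase_cons_head, absd]
        omega
      exact ih _ hlt (by omega) _ rfl
    simp only [Function.comp_apply]
    rw [this, sub_zero, norm_mul, Complex.norm_natCast]
    apply mul_le_mul_of_nonneg_left _ (Nat.cast_nonneg _)
    apply hmax
    · intro x hx
      simp only [Multiset.erase_cons_head, Multiset.mem_cons] at hx
      rcases hx with rfl | hx
      · omega
      · exact hSpos x (Multiset.mem_cons_of_mem hx)
    · simp only [Multiset.erase_cons_head, Multiset.sum_cons]
      omega
  have hfin : (2 * n + 1 : ℝ) * m ≤ k' * m + (S.sum : ℝ) * m := by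
    have h3 : (2 * n + 1 : ℂ) * F π.parts = -(∑ i ∈ Finset.range k',
        (F ((i + 1) ::ₘ (k' + 1 - (i + 1)) ::ₘ S) + F (absd (k' + 1) (2 * (i + 1)) ::ₘ S)) +
        (S.map fun l : ℕ => (l : ℂ) * (F ((k' + 1 + l) ::ₘ S.erase l) -
          F (absd (k' + 1) l ::ₘ S.erase l))).sum) := by
      linear_combination key
    have h4 : ‖(2 * n + 1 : ℂ) * F π.parts‖ = (2 * n + 1 : ℝ) * m := by
      rw [norm_mul]
      congr 1
      have : (2 * n + 1 : ℂ) = ((2 * n + 1 : ℕ) : ℂ) := by push_cast; ring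
      rw [this, Complex.norm_natCast]
      push_cast; ring
    rw [← h4, h3, norm_neg]
    exact (norm_add_le _ _).trans (add_le_add b1 b2)
  have hm0 : 0 ≤ m := norm_nonneg _
  have hc : (k' : ℝ) + S.sum + 1 ≤ 2 * n + 1 := by
    exact_mod_cast (by omega : k' + S.sum + 1 ≤ 2 * n + 1)
  nlinarith

/-- Parity indicator. -/
def eta (m : ℕ) : ℂ := if Even m then 1 else 0

theorem eta_add_two (m : ℕ) : eta (m + 2) = eta m := by
  simp [eta, Nat.even_add]

/-- One-variable Gaussian moments (with index `0` representing the scalar `2n`). -/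
def gmom (n l : ℕ) : ℕ → ℂ
  | 0 => 1
  | 1 => if l = 0 then 2 * n else - eta l
  | (a + 2) => if l = 0 then 2 * n * gmom n l (a + 1) else
      - eta l * gmom n l (a + 1) + l * (a + 1) * gmom n l a

theorem gmom_succ (n l a : ℕ) (hl : l ≠ 0) :
    gmom n l (a + 1) = - eta l * gmom n l a + l * a * gmom n l (a - 1) := by
  rcases a with _ | a
  · simp [gmom, hl]
  · simp [gmom, hl]

theorem gmom_zero_succ (n a : ℕ) : gmom n 0 (a + 1) = 2 * n * gmom n 0 a := by
  rcases a with _ | a <;> simp [gmom]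

/-- The Gaussian functional on multisets. -/
def Gm (n : ℕ) (S : Multiset ℕ) : ℂ := ∏ l ∈ S.toFinset, gmom n l (S.count l)

theorem Gm_eq (n : ℕ) (S : Multiset ℕ) (T : Finset ℕ) (hT : S.toFinset ⊆ T) :
    Gm n S = ∏ l ∈ T, gmom n l (S.count l) := by
  apply Finset.prod_subset hT
  intro x _ hx
  rw [Multiset.mem_toFinset] at hx
  rw [Multiset.count_eq_zero_of_notMem hx]
  simp [gmom]

theorem Gm_split (n m : ℕ) (S : Multiset ℕ) (T : Finset ℕ) (hT : S.toFinset ⊆ insert m T) :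
    Gm n S = gmom n m (S.count m) * ∏ l ∈ T.erase m, gmom n l (S.count l) := by
  rw [Gm_eq n S _ hT, ← Finset.mul_prod_erase _ _ (Finset.mem_insert_self m T)]
  congr 2
  ext x
  simp

theorem Gm_cons_zero (n : ℕ) (S : Multiset ℕ) : Gm n (0 ::ₘ S) = 2 * n * Gm n S := by
  rw [Gm_split n 0 (0 ::ₘ S) S.toFinset (by simp), Gm_split n 0 S S.toFinset (Finset.subset_insert _ _),
    Multiset.count_cons_self, gmom_zero_succ, mul_assoc]
  congr 2
  apply Finset.prod_congr rfl
  intro x hx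
  rw [Multiset.count_cons_of_ne (Finset.ne_of_mem_erase hx)]

theorem Gm_cons (n m : ℕ) (hm : m ≠ 0) (S : Multiset ℕ) :
    Gm n (m ::ₘ S) = - eta m * Gm n S + m * (S.count m * Gm n (S.erase m)) := by
  rw [Gm_split n m (m ::ₘ S) S.toFinset (by simp), Gm_split n m S S.toFinset (Finset.subset_insert _ _),
    Gm_split n m (S.erase m) S.toFinset
      ((Multiset.toFinset_subset.mpr (Multiset.erase_subset _ _)).trans (Finset.subset_insert _ _)),
    Multiset.count_cons_self, gmom_succ n m _ hm, Multiset.count_erase_self]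
  have h1 : ∏ l ∈ S.toFinset.erase m, gmom n l ((m ::ₘ S).count l) =
      ∏ l ∈ S.toFinset.erase m, gmom n l (S.count l) := by
    apply Finset.prod_congr rfl
    intro x hx
    rw [Multiset.count_cons_of_ne (Finset.ne_of_mem_erase hx)]
  have h2 : ∏ l ∈ S.toFinset.erase m, gmom n l ((S.erase m).count l) =
      ∏ l ∈ S.toFinset.erase m, gmom n l (S.count l) := by
    apply Finset.prod_congr rfl
    intro x hx
    rw [Multiset.count_erase_of_ne (Finset.ne_of_mem_erase hx)]
  rw [h1, h2]
  ring

/-- First derivative. -/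
def G1 (n : ℕ) (S : Multiset ℕ) (l : ℕ) : ℂ := S.count l * Gm n (S.erase l)
/-- Second derivative. -/
def G2 (n : ℕ) (S : Multiset ℕ) (l r : ℕ) : ℂ := S.count l * G1 n (S.erase l) r

theorem G2_symm (n : ℕ) (S : Multiset ℕ) (l r : ℕ) : G2 n S l r = G2 n S r l := by
  unfold G2 G1
  by_cases h : l = r
  · rw [h]
  · rw [Multiset.count_erase_of_ne (Ne.symm h), Multiset.count_erase_of_ne h, Multiset.erase_comm]
    ring

theorem Gm_cons1 (n m : ℕ) (hm : m ≠ 0) (S : Multiset ℕ) :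
    Gm n (m ::ₘ S) = - eta m * Gm n S + m * G1 n S m := Gm_cons n m hm S

theorem Gm_cons1_erase (n m l : ℕ) (hm : m ≠ 0) (S : Multiset ℕ) :
    (S.count l : ℂ) * Gm n (m ::ₘ S.erase l) = - eta m * G1 n S l + m * G2 n S l m := by
  rw [Gm_cons1 n m hm]
  unfold G2
  rw [G1.eq_def n S l]
  ring

theorem Gm_cons2 (n i j : ℕ) (hi : i ≠ 0) (hj : j ≠ 0) (S : Multiset ℕ) :
    Gm n (i ::ₘ j ::ₘ S) = eta i * eta j * Gm n S - eta i * j * G1 n S j - i * eta j * G1 n S i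
      + (if i = j then (i : ℂ) * Gm n S else 0) + i * j * G2 n S i j := by
  rw [Gm_cons n i hi, Gm_cons1 n j hj]
  have h : ((j ::ₘ S).count i : ℂ) * Gm n ((j ::ₘ S).erase i) =
      (if i = j then Gm n S else 0) + S.count i * Gm n (j ::ₘ S.erase i) := by
    by_cases h : i = j
    · subst h
      simp only [Multiset.count_cons_self, Multiset.erase_cons_head, if_true]
      by_cases hc : i ∈ S
      · rw [Multiset.cons_erase hc]; push_cast; ring
      · rw [Multiset.count_eq_zero_of_notMem hc]; simp
    · rw [Multiset.count_cons_of_ne h, Multiset.erase_cons_tail _ (Ne.symm h), if_neg h, zero_add]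
  rw [h, Gm_cons1_erase n j i hj]
  split_ifs <;> ring

theorem parity_sum (f : ℕ → ℂ) (hf : f 0 = 0) (k : ℕ) :
    ∑ i ∈ Finset.range (k + 1), f (absd k (2 * i)) =
      2 * ∑ m ∈ Finset.range (k + 1), eta (k - m) * f m := by
  induction k using Nat.strong_induction_on with
  | _ k ih =>
  match k with
  | 0 => simp [absd, hf]
  | 1 => simp [Finset.sum_range_succ, absd, eta]; ring
  | (k + 2) =>
    have := ih k (by omega)
    rw [Finset.sum_range_succ, Finset.sum_range_succ', Finset.sum_range_succ (n := k + 2),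
      Finset.sum_range_succ (n := k + 1)]
    have h1 : ∑ i ∈ Finset.range (k + 1), f (absd (k + 2) (2 * (i + 1))) =
        ∑ i ∈ Finset.range (k + 1), f (absd k (2 * i)) := by
      apply Finset.sum_congr rfl
      intro i _
      congr 1
      unfold absd; omega
    have h2 : ∑ m ∈ Finset.range (k + 1), eta (k + 2 - m) * f m =
        ∑ m ∈ Finset.range (k + 1), eta (k - m) * f m := by
      apply Finset.sum_congr rfl
      intro i hi
      rw [Finset.mem_range] at hi
      rw [show k + 2 - i = (k - i) + 2 by omega, eta_add_two]
    rw [h1, h2, this]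
    have a1 : absd (k + 2) (2 * 0) = k + 2 := by unfold absd; omega
    have a2 : absd (k + 2) (2 * (k + 2)) = k + 2 := by unfold absd; omega
    rw [a1, a2]
    have a3 : k + 2 - (k + 1) = 1 := by omega
    have a4 : k + 2 - (k + 2) = 0 := by omega
    rw [a3, a4]
    simp [eta]
    ring

theorem eta_sum_half (h : ℕ) : ∑ i ∈ Finset.range (2 * h + 1), eta (i + 1) = h := by
  induction h with
  | zero => simp [eta]
  | succ h ih =>
    rw [show 2 * (h + 1) + 1 = (2 * h + 1) + 1 + 1 by ring, Finset.sum_range_succ,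
      Finset.sum_range_succ, ih]
    have h1 : eta (2 * h + 1 + 1) = 1 := by
      unfold eta; rw [if_pos]; exact ⟨h + 1, by ring⟩
    have h2 : eta (2 * h + 1 + 1 + 1) = 0 := by
      unfold eta; rw [if_neg]; rw [Nat.not_even_iff_odd]; exact ⟨h + 1, by ring⟩
    rw [h1, h2]
    push_cast; ring

theorem const_coeff (n k' : ℕ) :
    ∑ i ∈ Finset.range k', (eta (i + 1) * eta (k' - i) - eta (k' + 1) +
      (if i + 1 = k' - i then ((i + 1 : ℕ) : ℂ) + 2 * n + eta (k' + 1) else 0)) =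
      (2 * n + 1) * eta (k' + 1) := by
  rcases Nat.even_or_odd' k' with ⟨h, rfl | rfl⟩
  · have e : eta (2 * h + 1) = 0 := by
      unfold eta; rw [if_neg]; rw [Nat.not_even_iff_odd]; exact ⟨h, rfl⟩
    rw [e, mul_zero]
    apply Finset.sum_eq_zero
    intro i hi
    rw [Finset.mem_range] at hi
    rw [if_neg (by omega)]
    have : eta (i + 1) * eta (2 * h - i) = 0 := by
      unfold eta
      rw [mul_eq_zero]
      rcases Nat.even_or_odd (i + 1) with h1 | h1
      · right
        rw [if_neg]
        rw [Nat.not_even_iff_odd]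
        obtain ⟨r, hr⟩ := h1
        exact ⟨h - r, by omega⟩
      · left
        rw [if_neg]
        rwa [Nat.not_even_iff_odd]
    rw [this]; ring
  · have e : eta (2 * h + 1 + 1) = 1 := by
      unfold eta; rw [if_pos]; exact ⟨h + 1, by ring⟩
    rw [e, Finset.sum_add_distrib, Finset.sum_sub_distrib]
    have h1 : ∑ i ∈ Finset.range (2 * h + 1), eta (i + 1) * eta (2 * h + 1 - i) = h := by
      rw [← eta_sum_half]
      apply Finset.sum_congr rfl
      intro i hi
      rw [Finset.mem_range] at hi
      have : eta (2 * h + 1 - i) = eta (i + 1) := by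
        unfold eta
        congr 1
        rw [Nat.even_iff, Nat.even_iff, eq_iff_iff]
        omega
      rw [this]
      unfold eta
      split_ifs <;> simp
    have h2 : ∑ i ∈ Finset.range (2 * h + 1), (if i + 1 = 2 * h + 1 - i then
        ((i + 1 : ℕ) : ℂ) + 2 * n + 1 else 0) = ((h + 1 : ℕ) : ℂ) + 2 * n + 1 := by
      rw [Finset.sum_eq_single h]
      · rw [if_pos (by omega)]
      · intro b hb hbh
        rw [Finset.mem_range] at hb
        rw [if_neg (by omega)]
      · intro hh
        exact absurd (Finset.mem_range.mpr (by omega)) hh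
    rw [h1, h2]
    simp
    ring

theorem Gm_loop (n : ℕ) : LoopEq (Gm n) := by
  intro k hk S
  obtain ⟨k', rfl⟩ : ∃ k', k = k' + 1 := ⟨k - 1, by omega⟩
  set c := Gm n S with hc
  set d := G1 n S with hd
  set H := G2 n S with hH
  have Hs : ∀ l r, H l r = H r l := G2_symm n S
  rw [Finset.sum_range_succ']
  have e0 : Gm n (0 ::ₘ (k' + 1 - 0) ::ₘ S) + Gm n (absd (k' + 1) (2 * 0) ::ₘ S)
      = (2 * n + 1) * (- eta (k' + 1) * c + (k' + 1 : ℕ) * d (k' + 1)) := by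
    rw [Gm_cons_zero]
    have : absd (k' + 1) (2 * 0) = k' + 1 := by unfold absd; omega
    rw [this, Nat.sub_zero, Gm_cons1 n (k' + 1) (by omega)]
    ring
  have e1 : ∀ i ∈ Finset.range k', Gm n ((i + 1) ::ₘ (k' + 1 - (i + 1)) ::ₘ S) +
      Gm n (absd (k' + 1) (2 * (i + 1)) ::ₘ S) =
      (eta (i + 1) * eta (k' - i) - eta (k' + 1) +
      (if i + 1 = k' - i then ((i + 1 : ℕ) : ℂ) + 2 * n + eta (k' + 1) else 0)) * c
      - eta (i + 1) * (k' - i : ℕ) * d (k' - i) - (i + 1 : ℕ) * eta (k' - i) * d (i + 1)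
      + (absd (k' + 1) (2 * (i + 1)) : ℕ) * d (absd (k' + 1) (2 * (i + 1)))
      + (i + 1 : ℕ) * (k' - i : ℕ) * H (i + 1) (k' - i) := by
    intro i hi
    rw [Finset.mem_range] at hi
    rw [show k' + 1 - (i + 1) = k' - i by omega, Gm_cons2 n (i + 1) (k' - i) (by omega) (by omega)]
    by_cases h : i + 1 = k' - i
    · have ha : absd (k' + 1) (2 * (i + 1)) = 0 := by unfold absd; omega
      rw [ha, Gm_cons_zero, if_pos h, if_pos h]
      push_cast
      ring
    · have ha : absd (k' + 1) (2 * (i + 1)) ≠ 0 := by unfold absd; omega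
      have hb : eta (absd (k' + 1) (2 * (i + 1))) = eta (k' + 1) := by
        unfold eta
        congr 1
        rw [Nat.even_iff, Nat.even_iff, eq_iff_iff]
        unfold absd
        omega
      rw [Gm_cons1 n _ ha, if_neg h, if_neg h, hb]
      ring
  rw [e0, Finset.sum_congr rfl e1]
  -- the multiset sum
  set L := S.sum + 1 with hLdef
  have hLS : ∀ l, L ≤ l → S.count l = 0 := by
    intro l hl
    apply Multiset.count_eq_zero_of_notMem
    intro hm
    have := Multiset.le_sum_of_mem hm
    omega
  have e2 : (S.map fun l : ℕ => (l : ℂ) * (Gm n ((k' + 1 + l) ::ₘ S.erase l) -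
      Gm n (absd (k' + 1) l ::ₘ S.erase l))).sum =
      ∑ l ∈ Finset.range (k' + 1 + L), ((l : ℂ) * (k' + 1 + l : ℕ) * H l (k' + 1 + l)
        - l * (absd (k' + 1) l : ℕ) * H l (absd (k' + 1) l)
        - (if l = k' + 1 then (k' + 1 : ℕ) * (2 * n + 1) * d (k' + 1) else 0)) := by
    rw [Finset.sum_multiset_map_count]
    rw [Finset.sum_subset (s₂ := Finset.range (k' + 1 + L))]
    · apply Finset.sum_congr rfl
      intro l _
      have a1 := Gm_cons1_erase n (k' + 1 + l) l (by omega) S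
      have a2 : (S.count l : ℂ) * Gm n (absd (k' + 1) l ::ₘ S.erase l) =
          - eta (k' + 1 + l) * d l + (absd (k' + 1) l : ℕ) * H l (absd (k' + 1) l)
          + (if l = k' + 1 then (2 * n + 1) * d (k' + 1) else 0) := by
        by_cases h : l = k' + 1
        · subst h
          have ha : absd (k' + 1) (k' + 1) = 0 := by unfold absd; omega
          have hb : eta (k' + 1 + (k' + 1)) = 1 := by
            unfold eta; rw [if_pos]; exact ⟨k' + 1, rfl⟩
          rw [ha, Gm_cons_zero, if_pos rfl, hb, hd, G1]
          push_cast
          ring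
        · have ha : absd (k' + 1) l ≠ 0 := by unfold absd; omega
          have hb : eta (absd (k' + 1) l) = eta (k' + 1 + l) := by
            unfold eta
            congr 1
            rw [Nat.even_iff, Nat.even_iff, eq_iff_iff]
            unfold absd
            omega
          rw [Gm_cons1_erase n _ l ha, if_neg h, hb]
          ring
      rw [nsmul_eq_mul]
      have : (S.count l : ℂ) * ((l : ℂ) * (Gm n ((k' + 1 + l) ::ₘ S.erase l) -
        Gm n (absd (k' + 1) l ::ₘ S.erase l))) = l * ((S.count l : ℂ) *
          Gm n ((k' + 1 + l) ::ₘ S.erase l)) - l * ((S.count l : ℂ) *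
          Gm n (absd (k' + 1) l ::ₘ S.erase l)) := by ring
      rw [this, a1, a2]
      split_ifs with h
      · subst h; ring
      · ring
    · intro l hl
      rw [Multiset.mem_toFinset] at hl
      rw [Finset.mem_range]
      have := Multiset.le_sum_of_mem hl
      omega
    · intro l _ hl
      rw [Multiset.mem_toFinset] at hl
      rw [Multiset.count_eq_zero_of_notMem hl, zero_smul]
  rw [e2]
  have H0 : ∀ l r, L ≤ l → H l r = 0 := by
    intro l r hl
    rw [hH, G2, hLS l hl]
    simp
  have e3 : ∑ l ∈ Finset.range (k' + 1 + L), (l : ℂ) * (k' + 1 + l : ℕ) * H l (k' + 1 + l) =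
      ∑ l ∈ Finset.range L, (l : ℂ) * (k' + 1 + l : ℕ) * H l (k' + 1 + l) := by
    symm
    apply Finset.sum_subset
    · intro x hx
      rw [Finset.mem_range] at hx ⊢
      omega
    · intro x _ hx
      rw [Finset.mem_range] at hx
      rw [H0 x _ (by omega), mul_zero]
  have e4 : ∑ l ∈ Finset.range (k' + 1 + L), (l : ℂ) * (absd (k' + 1) l : ℕ) *
        H l (absd (k' + 1) l) =
      ∑ i ∈ Finset.range k', ((i + 1 : ℕ) : ℂ) * (k' - i : ℕ) * H (i + 1) (k' - i) +
      ∑ l ∈ Finset.range L, (l : ℂ) * (k' + 1 + l : ℕ) * H l (k' + 1 + l) := by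
    rw [Finset.sum_range_add, Finset.sum_range_succ']
    congr 1
    · rw [Nat.cast_zero, zero_mul, zero_mul, add_zero]
      apply Finset.sum_congr rfl
      intro i hi
      rw [Finset.mem_range] at hi
      have : absd (k' + 1) (i + 1) = k' - i := by unfold absd; omega
      rw [this]
    · apply Finset.sum_congr rfl
      intro m _
      have : absd (k' + 1) (k' + 1 + m) = m := by unfold absd; omega
      rw [this, Hs m]
      ring
  have e5 : ∑ l ∈ Finset.range (k' + 1 + L),
      (if l = k' + 1 then (k' + 1 : ℕ) * (2 * n + 1) * d (k' + 1) else 0) =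
      (k' + 1 : ℕ) * (2 * n + 1) * d (k' + 1) := by
    rw [Finset.sum_ite_eq' , if_pos]
    rw [Finset.mem_range]
    omega
  have e6 : ∑ i ∈ Finset.range k', eta (i + 1) * (k' - i : ℕ) * d (k' - i) =
      ∑ i ∈ Finset.range k', ((i + 1 : ℕ) : ℂ) * eta (k' - i) * d (i + 1) := by
    rw [← Finset.sum_range_reflect]
    apply Finset.sum_congr rfl
    intro i hi
    rw [Finset.mem_range] at hi
    rw [show k' - 1 - i + 1 = k' - i by omega, show k' - (k' - 1 - i) = i + 1 by omega]
    ring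
  have e7 := parity_sum (fun m => (m : ℂ) * d m) (by simp) (k' + 1)
  rw [Finset.sum_range_succ, Finset.sum_range_succ', Finset.sum_range_succ,
    Finset.sum_range_succ' _ k'] at e7
  have a1 : absd (k' + 1) 0 = k' + 1 := by unfold absd; omega
  have a2 : absd (k' + 1) (2 * (k' + 1)) = k' + 1 := by unfold absd; omega
  have a3 : k' + 1 - (k' + 1) = 0 := by omega
  have a4 : eta 0 = 1 := by simp [eta]
  simp only [a1, a2, a3, a4, Nat.add_sub_add_right, Nat.cast_zero, zero_mul, mul_zero, add_zero,
    one_mul] at e7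
  have e8 : ∑ x ∈ Finset.range k', eta (k' - x) * (((x + 1 : ℕ) : ℂ) * d (x + 1)) =
      ∑ i ∈ Finset.range k', ((i + 1 : ℕ) : ℂ) * eta (k' - i) * d (i + 1) :=
    Finset.sum_congr rfl (fun i _ => by ring)
  rw [e8] at e7
  have e9 := const_coeff n k'
  rw [Finset.sum_sub_distrib, Finset.sum_sub_distrib, e3, e4, e5]
  rw [Finset.sum_add_distrib, Finset.sum_add_distrib, Finset.sum_sub_distrib,
    Finset.sum_sub_distrib, ← Finset.sum_mul, e9, e6]
  linear_combination e7

theorem loop_unique (n : ℕ) (F : Multiset ℕ → ℂ) (hE : F 0 = 1)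
    (h0 : ∀ S, F (0 ::ₘ S) = 2 * n * F S) (hL : LoopEq F) (S : Multiset ℕ)
    (hS : S.sum ≤ 2 * n + 1) : F S = Gm n S := by
  have := loop_vanish n (fun S => F S - Gm n S) (by simp [hE, Gm])
    (by intro S; simp only [h0, Gm_cons_zero]; ring) (by
      intro k hk S
      have h1 := hL k hk S
      have h2 := Gm_loop n k hk S
      rw [← sub_eq_zero.mpr (h1.trans h2.symm)]
      have e : (fun l : ℕ => (l : ℂ) * (F ((k + l) ::ₘ S.erase l) - Gm n ((k + l) ::ₘ S.erase l) -
          (F (absd k l ::ₘ S.erase l) - Gm n (absd k l ::ₘ S.erase l)))) =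
          fun l : ℕ => (l : ℂ) * (F ((k + l) ::ₘ S.erase l) - F (absd k l ::ₘ S.erase l)) -
          (l : ℂ) * (Gm n ((k + l) ::ₘ S.erase l) - Gm n (absd k l ::ₘ S.erase l)) := by
        funext l; ring
      simp only [e, Multiset.sum_map_sub, Finset.sum_add_distrib, Finset.sum_sub_distrib]
      ring) S.sum hS S rfl
  exact sub_eq_zero.mp this

/-- The ambient matrix algebra. -/
abbrev MatN (n : ℕ) := Matrix (Fin n ⊕ Fin n) (Fin n ⊕ Fin n) ℂ

/-- The underlying matrix. -/
def toMat {n : ℕ} (M : USp n) : MatN n := ((M : Matrix.unitaryGroup (Fin n ⊕ Fin n) ℂ) : MatN n)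

theorem continuous_toMat {n : ℕ} : Continuous (toMat (n := n)) :=
  continuous_subtype_val.comp continuous_subtype_val

instance unitary_compact (n : ℕ) : CompactSpace (Matrix.unitaryGroup (Fin n ⊕ Fin n) ℂ) := by
  apply isCompact_iff_compactSpace.mp
  have hK : IsCompact (Set.pi Set.univ (fun _ : Fin n ⊕ Fin n =>
      Set.pi Set.univ (fun _ : Fin n ⊕ Fin n => Metric.closedBall (0 : ℂ) 1))) :=
    isCompact_univ_pi (fun _ => isCompact_univ_pi (fun _ => isCompact_closedBall _ _))
  refine IsCompact.of_isClosed_subset (X := MatN n) hK ?_ ?_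
  · have : ((Matrix.unitaryGroup (Fin n ⊕ Fin n) ℂ : Submonoid (MatN n)) : Set (MatN n)) =
        {A : MatN n | A * star A = 1} := by
      ext A
      exact Matrix.mem_unitaryGroup_iff
    change IsClosed ((Matrix.unitaryGroup (Fin n ⊕ Fin n) ℂ : Submonoid (MatN n)) : Set (MatN n))
    rw [this]
    exact isClosed_eq (continuous_id.mul continuous_star) continuous_const
  · intro A hA i _ j _
    rw [Metric.mem_closedBall, dist_zero_right]
    exact entry_norm_bound_of_unitary hA i j

instance usp_compact (n : ℕ) : CompactSpace (USp n) := by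
  apply isCompact_iff_compactSpace.mp
  apply IsClosed.isCompact
  have : (USp n : Set (Matrix.unitaryGroup (Fin n ⊕ Fin n) ℂ)) =
      {A : Matrix.unitaryGroup (Fin n ⊕ Fin n) ℂ | (A : MatN n) * J (Fin n) ℂ * (A : MatN n)ᵀ = J (Fin n) ℂ} := by
    ext A
    exact SymplecticGroup.mem_iff
  change IsClosed (USp n : Set (Matrix.unitaryGroup (Fin n ⊕ Fin n) ℂ))
  rw [this]
  refine isClosed_eq ?_ continuous_const
  exact (continuous_subtype_val.mul continuous_const).mul continuous_subtype_val.matrix_transpose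

instance matN_borel (n : ℕ) : BorelSpace (MatN n) :=
  inferInstanceAs (BorelSpace ((Fin n ⊕ Fin n) → (Fin n ⊕ Fin n) → ℂ))

instance unitary_borel (n : ℕ) : BorelSpace (Matrix.unitaryGroup (Fin n ⊕ Fin n) ℂ) :=
  Subtype.borelSpace _

instance usp_borel (n : ℕ) : BorelSpace (USp n) :=
  Subtype.borelSpace _

theorem usp_integrable {n : ℕ} (μ : Measure (USp n)) [IsProbabilityMeasure μ] (f : USp n → ℂ)
    (hf : Continuous f) : Integrable f μ :=
  hf.integrable_of_hasCompactSupport (HasCompactSupport.of_compactSpace f)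

section
open scoped Matrix.Norms.Operator

theorem exp_entry_deriv {n : ℕ} (X B : MatN n) (t : ℝ) (i j : Fin n ⊕ Fin n) :
    HasDerivAt (fun t : ℝ => (NormedSpace.exp (t • X) * B) i j)
      ((X * (NormedSpace.exp (t • X) * B)) i j) t := by
  have h := hasDerivAt_exp_smul_const' (𝕂 := ℝ) X t
  have h2 := h.mul_const B
  rw [mul_assoc] at h2
  have h3 := (LinearMap.toContinuousLinearMap (Matrix.entryLinearMap ℝ ℂ i j)).hasFDerivAt.comp_hasDerivAt t h2
  exact h3

end

theorem exp_mul_exp_neg {n : ℕ} (A : MatN n) : NormedSpace.exp A * NormedSpace.exp (-A) = 1 := by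
  have h := Matrix.exp_add_of_commute A (-A) (Commute.neg_right (Commute.refl A))
  rw [← h, add_neg_cancel, NormedSpace.exp_zero]

theorem exp_mem_unitary {n : ℕ} (X : MatN n) (hX : star X = -X) (t : ℝ) :
    NormedSpace.exp (t • X) ∈ Matrix.unitaryGroup (Fin n ⊕ Fin n) ℂ := by
  have h : (t • X)ᴴ = -(t • X) := by
    rw [Matrix.conjTranspose_smul, ← Matrix.star_eq_conjTranspose, hX]
    simp
  rw [Matrix.mem_unitaryGroup_iff, Matrix.star_eq_conjTranspose, ← Matrix.exp_conjTranspose, h,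
    exp_mul_exp_neg]

theorem exp_symplectic {n : ℕ} (X : MatN n) (hX : X * J (Fin n) ℂ + J (Fin n) ℂ * Xᵀ = 0) (t : ℝ) :
    NormedSpace.exp (t • X) ∈ Matrix.symplecticGroup (Fin n) ℂ := by
  rw [SymplecticGroup.mem_iff, ← Matrix.exp_transpose]
  have hJ : IsUnit (J (Fin n) ℂ) := (Matrix.isUnit_iff_isUnit_det _).mpr (Matrix.isUnit_det_J _ _)
  have hJi : J (Fin n) ℂ * (J (Fin n) ℂ)⁻¹ = 1 :=
    Matrix.mul_nonsing_inv _ (Matrix.isUnit_det_J _ _)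
  have hJi' : (J (Fin n) ℂ)⁻¹ * J (Fin n) ℂ = 1 :=
    Matrix.nonsing_inv_mul _ (Matrix.isUnit_det_J _ _)
  have h1 : -(t • X) = J (Fin n) ℂ * (t • X)ᵀ * (J (Fin n) ℂ)⁻¹ := by
    have h2 : J (Fin n) ℂ * Xᵀ = - (X * J (Fin n) ℂ) := eq_neg_of_add_eq_zero_right hX
    rw [Matrix.transpose_smul, Matrix.mul_smul, h2, Matrix.smul_mul, Matrix.neg_mul,
      Matrix.mul_assoc, hJi, Matrix.mul_one, smul_neg]
  have h3 := Matrix.exp_conj (J (Fin n) ℂ) (t • X)ᵀ hJ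
  rw [← h1] at h3
  have h4 : J (Fin n) ℂ * NormedSpace.exp (t • X)ᵀ = NormedSpace.exp (-(t • X)) * J (Fin n) ℂ := by
    rw [h3, Matrix.mul_assoc, hJi', Matrix.mul_one]
  rw [Matrix.mul_assoc, h4, ← Matrix.mul_assoc, exp_mul_exp_neg, Matrix.one_mul]

/-- `f'` is the derivative of `f` along the right-invariant vector field of `X`. -/
def HasDir {n : ℕ} (X : MatN n) (f f' : MatN n → ℂ) : Prop :=
  ∀ γ : ℝ → MatN n, (∀ t i j, HasDerivAt (fun t => γ t i j) ((X * γ t) i j) t) →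
    ∀ t, HasDerivAt (fun t => f (γ t)) (f' (γ t)) t

theorem haar_ibp {n : ℕ} (μ : Measure (USp n)) [IsProbabilityMeasure μ] [μ.IsHaarMeasure]
    (X : MatN n) (hX : star X = -X) (hXJ : X * J (Fin n) ℂ + J (Fin n) ℂ * Xᵀ = 0)
    (f f' : MatN n → ℂ) (hf : Continuous f) (hf' : Continuous f') (hd : HasDir X f f') :
    ∫ M, f' (toMat M) ∂μ = 0 := by
  let g : ℝ → USp n := fun t => ⟨⟨NormedSpace.exp (t • X), exp_mem_unitary X hX t⟩,
    exp_symplectic X hXJ t⟩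
  have hg : ∀ t M, toMat (g t * M) = NormedSpace.exp (t • X) * toMat M := fun t M => rfl
  obtain ⟨C, hC⟩ : ∃ C, ∀ M : USp n, ‖f' (toMat M)‖ ≤ C := by
    obtain ⟨C, hC⟩ := (isCompact_range (hf'.comp continuous_toMat)).isBounded.exists_norm_le
    exact ⟨C, fun M => hC _ ⟨M, rfl⟩⟩
  have hcont : ∀ (h : MatN n → ℂ), Continuous h → ∀ t,
      Continuous (fun M : USp n => h (toMat (g t * M))) := fun h hh t =>
    hh.comp (continuous_toMat.comp (continuous_const.mul continuous_id))
  have key := hasDerivAt_integral_of_dominated_loc_of_deriv_le (μ := μ) (𝕜 := ℝ)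
    (F := fun t M => f (toMat (g t * M))) (F' := fun t M => f' (toMat (g t * M)))
    (x₀ := 0) (s := Set.univ) (bound := fun _ => C) Filter.univ_mem
    (Filter.Eventually.of_forall fun t => (hcont f hf t).aestronglyMeasurable)
    (usp_integrable μ _ (hcont f hf 0)) (hcont f' hf' 0).aestronglyMeasurable
    (Filter.Eventually.of_forall fun M t _ => hC _) (integrable_const C)
    (Filter.Eventually.of_forall fun M t _ => by
      simp only [hg]
      exact hd (fun t => NormedSpace.exp (t • X) * toMat M)
        (fun t i j => exp_entry_deriv X (toMat M) t i j) t)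
  have h2 := key.2
  have h3 : (fun t => ∫ M, f (toMat (g t * M)) ∂μ) = fun _ => ∫ M, f (toMat M) ∂μ := by
    funext t
    exact integral_mul_left_eq_self (fun M => f (toMat M)) (g t)
  rw [h3] at h2
  have h4 := h2.unique (hasDerivAt_const (0 : ℝ) _)
  rw [← h4]
  exact (integral_mul_left_eq_self (fun M => f' (toMat M)) (g 0)).symm

theorem hasDir_pow {n : ℕ} (X : MatN n) (k : ℕ) : ∀ i j, HasDir X (fun A => (A ^ k) i j)
    (fun A => (∑ r ∈ Finset.range k, A ^ r * X * A ^ (k - r)) i j) := by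
  induction k with
  | zero =>
    intro i j γ hγ t
    simpa using hasDerivAt_const t _
  | succ k ih =>
    intro i j γ hγ t
    have h1 : ∀ m ∈ (Finset.univ : Finset (Fin n ⊕ Fin n)), HasDerivAt
        (fun t => (γ t ^ k) i m * γ t m j)
        ((∑ r ∈ Finset.range k, γ t ^ r * X * γ t ^ (k - r)) i m * γ t m j +
          (γ t ^ k) i m * (X * γ t) m j) t := fun m _ =>
      (ih i m γ hγ t).mul (hγ t m j)
    have h2 := HasDerivAt.fun_sum h1
    have e1 : (fun t => (γ t ^ (k + 1)) i j) = fun t => ∑ m, (γ t ^ k) i m * γ t m j := by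
      funext t
      rw [pow_succ, Matrix.mul_apply]
    have e2 : (∑ r ∈ Finset.range (k + 1), γ t ^ r * X * γ t ^ (k + 1 - r)) i j =
        ∑ m, ((∑ r ∈ Finset.range k, γ t ^ r * X * γ t ^ (k - r)) i m * γ t m j +
          (γ t ^ k) i m * (X * γ t) m j) := by
      have e3 : ∑ r ∈ Finset.range (k + 1), γ t ^ r * X * γ t ^ (k + 1 - r) =
          (∑ r ∈ Finset.range k, γ t ^ r * X * γ t ^ (k - r)) * γ t + γ t ^ k * (X * γ t) := by
        have e4 : ∀ r ∈ Finset.range k, γ t ^ r * X * γ t ^ (k + 1 - r) =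
            γ t ^ r * X * γ t ^ (k - r) * γ t := by
          intro r hr
          rw [Finset.mem_range] at hr
          rw [show k + 1 - r = (k - r) + 1 by omega, pow_succ, ← mul_assoc]
        rw [Finset.sum_range_succ, Finset.sum_mul, Finset.sum_congr rfl e4,
          show k + 1 - k = 1 by omega, pow_one, mul_assoc]
      rw [Finset.sum_add_distrib, e3, Matrix.add_apply, Matrix.mul_apply, Matrix.mul_apply]
    beta_reduce
    rw [e1, e2]
    exact h2

theorem hasDir_trace {n : ℕ} (X : MatN n) (k : ℕ) : HasDir X (fun A => trace (A ^ k))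
    (fun A => k * trace (X * A ^ k)) := by
  intro γ hγ t
  have h1 : ∀ m ∈ (Finset.univ : Finset (Fin n ⊕ Fin n)), HasDerivAt
        (fun t => (γ t ^ k) m m)
        ((∑ r ∈ Finset.range k, γ t ^ r * X * γ t ^ (k - r)) m m) t := fun m _ =>
      hasDir_pow X k m m γ hγ t
  have h2 := HasDerivAt.fun_sum h1
  have e : (k : ℂ) * trace (X * γ t ^ k) =
      ∑ m, (∑ r ∈ Finset.range k, γ t ^ r * X * γ t ^ (k - r)) m m := by
    change _ = trace (∑ r ∈ Finset.range k, γ t ^ r * X * γ t ^ (k - r))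
    rw [Matrix.trace_sum]
    have : ∀ r ∈ Finset.range k, trace (γ t ^ r * X * γ t ^ (k - r)) = trace (X * γ t ^ k) := by
      intro r hr
      rw [Finset.mem_range] at hr
      rw [Matrix.trace_mul_cycle, ← pow_add, Matrix.trace_mul_comm]
      congr 3
      omega
    rw [Finset.sum_congr rfl this]
    simp
  beta_reduce
  rw [e]
  exact h2

/-- Product of power traces. -/
def ptr {n : ℕ} (S : Multiset ℕ) (A : MatN n) : ℂ := (S.map fun l => trace (A ^ l)).prod

theorem hasDir_ptr {n : ℕ} (X : MatN n) (S : Multiset ℕ) : HasDir X (ptr S)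
    (fun A => (S.map fun l : ℕ => ptr (S.erase l) A * (l * trace (X * A ^ l))).sum) := by
  intro γ hγ t
  have h := HasFDerivAt.multiset_prod (𝕜 := ℝ) (u := S) (x := t)
    (g := fun (l : ℕ) t => trace (γ t ^ l))
    (g' := fun l : ℕ => ContinuousLinearMap.toSpanSingleton ℝ ((l : ℂ) * trace (X * γ t ^ l)))
    (fun l _ => (hasDir_trace X l γ hγ t).hasFDerivAt)
  have h2 := h.hasDerivAt
  have this : ∀ T : Multiset (ℝ →L[ℝ] ℂ), T.sum 1 = (T.map fun φ => φ 1).sum := by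
    intro T
    induction T using Multiset.induction with
    | empty => simp
    | cons a T ih => simp [ih]
  refine h2.congr_deriv ?_
  refine (this _).trans ?_
  rw [Multiset.map_map]
  congr 1
  apply Multiset.map_congr rfl
  intro l _
  simp [ptr]

/-- The test function. -/
def testf {n : ℕ} (k : ℕ) (S : Multiset ℕ) (b a : Fin n ⊕ Fin n) (A : MatN n) : ℂ :=
  (A ^ k) b a * ptr S A

/-- Its directional derivative. -/
def testf' {n : ℕ} (k : ℕ) (S : Multiset ℕ) (b a : Fin n ⊕ Fin n) (X A : MatN n) : ℂ :=
  (∑ r ∈ Finset.range k, A ^ r * X * A ^ (k - r)) b a * ptr S A +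
    (A ^ k) b a * (S.map fun l : ℕ => ptr (S.erase l) A * (l * trace (X * A ^ l))).sum

theorem hasDir_testf {n : ℕ} (k : ℕ) (S : Multiset ℕ) (b a : Fin n ⊕ Fin n) (X : MatN n) :
    HasDir X (testf k S b a) (testf' k S b a X) := fun γ hγ t =>
  (hasDir_pow X k b a γ hγ t).mul (hasDir_ptr X S γ hγ t)

theorem continuous_ptr {n : ℕ} (S : Multiset ℕ) : Continuous (ptr (n := n) S) := by
  induction S using Multiset.induction with
  | empty =>
    have : ptr (n := n) 0 = fun _ => 1 := by
      funext A; simp [ptr]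
    rw [this]
    exact continuous_const
  | cons l S ih =>
    have : ptr (n := n) (l ::ₘ S) = fun A => trace (A ^ l) * ptr S A := by
      funext A; simp [ptr]
    rw [this]
    exact ((continuous_id.pow l).matrix_trace).mul ih

theorem continuous_msum {E : Type*} [TopologicalSpace E] (S : Multiset ℕ) (f : ℕ → E → ℂ)
    (hf : ∀ l, Continuous (f l)) :
    Continuous (fun A => (S.map fun l : ℕ => f l A).sum) := by
  induction S using Multiset.induction with
  | empty => simpa using continuous_const
  | cons l S ih =>
    simp only [Multiset.map_cons, Multiset.sum_cons]
    exact (hf l).add ih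

theorem continuous_testf {n : ℕ} (k : ℕ) (S : Multiset ℕ) (b a : Fin n ⊕ Fin n) :
    Continuous (testf (n := n) k S b a) :=
  ((continuous_id.pow k).matrix_elem b a).mul (continuous_ptr S)

theorem continuous_testf' {n : ℕ} (k : ℕ) (S : Multiset ℕ) (b a : Fin n ⊕ Fin n) (X : MatN n) :
    Continuous (testf' (n := n) k S b a X) := by
  apply Continuous.add
  · apply Continuous.mul _ (continuous_ptr S)
    apply Continuous.matrix_elem
    exact continuous_finsetSum _ fun r _ =>
      ((continuous_id.pow r).mul continuous_const).mul (continuous_id.pow (k - r))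
  · apply Continuous.mul ((continuous_id.pow k).matrix_elem b a)
    apply continuous_msum S (fun l A => ptr (S.erase l) A * (l * trace (X * A ^ l)))
    intro l
    exact (continuous_ptr _).mul (continuous_const.mul
      ((continuous_const.mul (continuous_id.pow l)).matrix_trace))

theorem testf'_linear {n : ℕ} (k : ℕ) (S : Multiset ℕ) (b a : Fin n ⊕ Fin n) (X Y : MatN n)
    (c : ℂ) (A : MatN n) :
    testf' k S b a (X + c • Y) A = testf' k S b a X A + c * testf' k S b a Y A := by
  unfold testf'
  have h1 : ∑ r ∈ Finset.range k, A ^ r * (X + c • Y) * A ^ (k - r) =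
      ∑ r ∈ Finset.range k, A ^ r * X * A ^ (k - r) +
        c • ∑ r ∈ Finset.range k, A ^ r * Y * A ^ (k - r) := by
    rw [Finset.smul_sum, ← Finset.sum_add_distrib]
    apply Finset.sum_congr rfl
    intro r _
    rw [mul_add, add_mul, Matrix.mul_smul, Matrix.smul_mul]
  have h2 : (S.map fun l : ℕ => ptr (S.erase l) A * (l * trace ((X + c • Y) * A ^ l))).sum =
      (S.map fun l : ℕ => ptr (S.erase l) A * (l * trace (X * A ^ l))).sum +
      c * (S.map fun l : ℕ => ptr (S.erase l) A * (l * trace (Y * A ^ l))).sum := by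
    rw [← Multiset.sum_map_mul_left, ← Multiset.sum_map_add]
    congr 1
    apply Multiset.map_congr rfl
    intro l _
    rw [add_mul, Matrix.trace_add, Matrix.smul_mul, Matrix.trace_smul, smul_eq_mul]
    ring
  rw [h1, h2, Matrix.add_apply, Matrix.smul_apply, smul_eq_mul]
  ring

/-- Projection to the symplectic Lie algebra. -/
def sympl {n : ℕ} (A : MatN n) : MatN n := A + J (Fin n) ℂ * Aᵀ * J (Fin n) ℂ

theorem sympl_J {n : ℕ} (A : MatN n) : sympl A * J (Fin n) ℂ + J (Fin n) ℂ * (sympl A)ᵀ = 0 := by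
  have h := Matrix.J_squared (Fin n) ℂ
  have h1 : J (Fin n) ℂ * Aᵀ * J (Fin n) ℂ * J (Fin n) ℂ = - (J (Fin n) ℂ * Aᵀ) := by
    rw [Matrix.mul_assoc, h]; simp
  have h2 : J (Fin n) ℂ * (J (Fin n) ℂ * (A * J (Fin n) ℂ)) = - (A * J (Fin n) ℂ) := by
    rw [← Matrix.mul_assoc, h]; simp
  simp only [sympl, Matrix.transpose_add, Matrix.transpose_mul, Matrix.transpose_transpose,
    Matrix.J_transpose, Matrix.add_mul, Matrix.mul_add, Matrix.neg_mul, Matrix.mul_neg, neg_neg,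
    h1, h2]
  abel

theorem J_conjTranspose (n : ℕ) : (J (Fin n) ℂ)ᴴ = - J (Fin n) ℂ := by
  rw [← Matrix.J_transpose]
  ext i j
  rcases i with i | i <;> rcases j with j | j <;>
    simp [Matrix.J, Matrix.fromBlocks, Matrix.one_apply]

theorem sympl_skew {n : ℕ} (A : MatN n) (hA : star A = -A) : star (sympl A) = - sympl A := by
  rw [Matrix.star_eq_conjTranspose] at *
  have h : Aᵀᴴ = - Aᵀ := by
    rw [← Matrix.transpose_neg, ← hA]
    rfl
  simp only [sympl, Matrix.conjTranspose_add, Matrix.conjTranspose_mul, J_conjTranspose, h, hA]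
  simp [Matrix.mul_assoc, add_comm]

theorem sympl_lin {n : ℕ} (A B : MatN n) (c : ℂ) : sympl (A + c • B) = sympl A + c • sympl B := by
  simp only [sympl, Matrix.transpose_add, Matrix.transpose_smul, Matrix.mul_add, Matrix.add_mul,
    Matrix.mul_smul, Matrix.smul_mul, smul_add]
  abel

theorem testf'_integral {n : ℕ} (μ : Measure (USp n)) [IsProbabilityMeasure μ] [μ.IsHaarMeasure]
    (k : ℕ) (S : Multiset ℕ) (b a : Fin n ⊕ Fin n) (A : MatN n) :
    ∫ M, testf' k S b a (sympl A) (toMat M) ∂μ = 0 := by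
  have skew : ∀ B : MatN n, star B = -B → ∫ M, testf' k S b a (sympl B) (toMat M) ∂μ = 0 :=
    fun B hB => haar_ibp μ (sympl B) (sympl_skew B hB) (sympl_J B) _ _ (continuous_testf k S b a)
      (continuous_testf' k S b a _) (hasDir_testf k S b a _)
  set B : MatN n := (1 / 2 : ℂ) • (A - Aᴴ) with hB
  set C : MatN n := (-Complex.I / 2) • (A + Aᴴ) with hC
  have hA : A = B + Complex.I • C := by
    rw [hB, hC, smul_smul]
    have : Complex.I * (-Complex.I / 2) = 1 / 2 := by
      linear_combination (-1/2 : ℂ) * Complex.I_mul_I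
    rw [this, ← smul_add]
    have : A - Aᴴ + (A + Aᴴ) = (2 : ℂ) • A := by rw [two_smul]; abel
    rw [this, smul_smul]
    norm_num
  have sB : star B = -B := by
    rw [Matrix.star_eq_conjTranspose, hB, Matrix.conjTranspose_smul, Matrix.conjTranspose_sub,
      Matrix.conjTranspose_conjTranspose, ← smul_neg, neg_sub]
    congr 1
    simp
  have sC : star C = -C := by
    rw [Matrix.star_eq_conjTranspose, hC, Matrix.conjTranspose_smul, Matrix.conjTranspose_add,
      Matrix.conjTranspose_conjTranspose, ← neg_smul, add_comm]
    congr 1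
    simp [neg_div]
  have hi : ∀ X : MatN n, Integrable (fun M => testf' k S b a X (toMat M)) μ := fun X =>
    usp_integrable μ _ ((continuous_testf' k S b a X).comp continuous_toMat)
  rw [hA, sympl_lin]
  simp only [testf'_linear]
  rw [integral_add (hi _) ((hi _).const_mul _), integral_const_mul, skew B sB, skew C sC]
  simp

section
variable {n : ℕ}

theorem single_mid (P Q : MatN n) (x y z w : Fin n ⊕ Fin n) :
    (P * Matrix.single x y 1 * Q : MatN n) z w = P z x * Q y w := by
  simp [Matrix.mul_apply, Matrix.single_apply, ite_and]

theorem tr_sum1 (P Q : MatN n) :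
    ∑ b : Fin n ⊕ Fin n, ∑ a : Fin n ⊕ Fin n, (P * Matrix.single b a 1 * Q : MatN n) b a =
      trace P * trace Q := by
  simp only [Matrix.trace, Matrix.diag, Finset.sum_mul_sum, single_mid]

theorem tr_sum2 (P Q : MatN n) :
    ∑ b : Fin n ⊕ Fin n, ∑ a : Fin n ⊕ Fin n, (P * Matrix.single a b 1 * Q : MatN n) b a =
      trace (P * Qᵀ) := by
  simp only [single_mid]
  simp only [Matrix.trace, Matrix.diag, Matrix.mul_apply, Matrix.transpose_apply]

theorem tr_single (a b : Fin n ⊕ Fin n) (Q : MatN n) :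
    trace (Matrix.single a b 1 * Q) = Q b a := by
  simp [Matrix.trace, Matrix.mul_apply, Matrix.single_apply, ite_and]

theorem tr_sum3 (R Q : MatN n) :
    ∑ b, ∑ a, R b a * trace (Matrix.single b a 1 * Q) = trace (R * Q) := by
  simp only [tr_single]
  simp only [Matrix.trace, Matrix.diag, Matrix.mul_apply]

theorem tr_sum4 (R Q : MatN n) :
    ∑ b, ∑ a, R b a * trace (Matrix.single a b 1 * Q) = trace (R * Qᵀ) := by
  simp only [tr_single]
  simp only [Matrix.trace, Matrix.diag, Matrix.mul_apply, Matrix.transpose_apply]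

theorem toMat_inv_left (M : USp n) : toMat M⁻¹ * toMat M = 1 := by
  change toMat (M⁻¹ * M) = 1
  rw [inv_mul_cancel]; rfl

theorem toMat_inv_right (M : USp n) : toMat M * toMat M⁻¹ = 1 := by
  change toMat (M * M⁻¹) = 1
  rw [mul_inv_cancel]; rfl

theorem toMat_symp (M : USp n) : toMat M * J (Fin n) ℂ * (toMat M)ᵀ = J (Fin n) ℂ :=
  SymplecticGroup.mem_iff.mp M.2

theorem J_pow_J (M : USp n) (l : ℕ) :
    J (Fin n) ℂ * (toMat M ^ l)ᵀ * J (Fin n) ℂ = - (toMat M⁻¹ ^ l) := by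
  have h1 : J (Fin n) ℂ * (toMat M)ᵀ = toMat M⁻¹ * J (Fin n) ℂ := by
    conv_rhs => rw [← toMat_symp M]
    rw [← Matrix.mul_assoc, ← Matrix.mul_assoc, toMat_inv_left, Matrix.one_mul]
  have h2 : ∀ l : ℕ, J (Fin n) ℂ * (toMat M ^ l)ᵀ = toMat M⁻¹ ^ l * J (Fin n) ℂ := by
    intro l
    induction l with
    | zero => simp
    | succ l ih =>
      rw [pow_succ', Matrix.transpose_mul, ← Matrix.mul_assoc, ih, Matrix.mul_assoc, h1,
        ← Matrix.mul_assoc, ← pow_succ]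
  rw [h2, Matrix.mul_assoc, Matrix.J_squared]
  simp

theorem trace_inv_pow (M : USp n) (l : ℕ) : trace (toMat M⁻¹ ^ l) = trace (toMat M ^ l) := by
  have h := J_pow_J M l
  have h2 : toMat M⁻¹ ^ l = - (J (Fin n) ℂ * (toMat M ^ l)ᵀ * J (Fin n) ℂ) := by rw [h, neg_neg]
  rw [h2, Matrix.trace_neg, Matrix.trace_mul_comm, ← Matrix.mul_assoc, Matrix.J_squared,
    Matrix.neg_mul, Matrix.one_mul, Matrix.trace_neg, neg_neg, Matrix.trace_transpose]

theorem trace_pow_inv (M : USp n) (i j : ℕ) :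
    trace (toMat M ^ i * toMat M⁻¹ ^ j) = trace (toMat M ^ (absd i j)) := by
  have hc : Commute (toMat M) (toMat M⁻¹) := (toMat_inv_right M).trans (toMat_inv_left M).symm
  have hp : ∀ m : ℕ, toMat M ^ m * toMat M⁻¹ ^ m = 1 := fun m => by
    rw [← hc.mul_pow, toMat_inv_right, one_pow]
  rcases le_total j i with h | h
  · obtain ⟨m, rfl⟩ := Nat.exists_eq_add_of_le' h
    rw [pow_add, Matrix.mul_assoc, hp, Matrix.mul_one]
    congr 2
    unfold absd; omega
  · obtain ⟨m, rfl⟩ := Nat.exists_eq_add_of_le h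
    rw [pow_add (toMat M⁻¹), ← Matrix.mul_assoc, hp, Matrix.one_mul, trace_inv_pow]
    congr 2
    unfold absd; omega

theorem trace_real (M : USp n) (l : ℕ) :
    (((trace (toMat M ^ l)).re : ℝ) : ℂ) = trace (toMat M ^ l) := by
  rw [← Complex.conj_eq_iff_re]
  have h1 : toMat M⁻¹ = (toMat M)ᴴ := rfl
  change star (trace (toMat M ^ l)) = _
  rw [← Matrix.trace_conjTranspose, Matrix.conjTranspose_pow, ← h1, trace_inv_pow]

theorem loop_pt1 (M : USp n) (i j : ℕ) :
    ∑ b : Fin n ⊕ Fin n, ∑ a : Fin n ⊕ Fin n,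
      (toMat M ^ i * sympl (Matrix.single b a 1) * toMat M ^ j : MatN n) b a =
      trace (toMat M ^ i) * trace (toMat M ^ j) + trace (toMat M ^ (absd i j)) := by
  have e : ∀ b a : Fin n ⊕ Fin n,
      (toMat M ^ i * sympl (Matrix.single b a 1) * toMat M ^ j : MatN n) b a =
      (toMat M ^ i * Matrix.single b a 1 * toMat M ^ j : MatN n) b a +
      ((toMat M ^ i * J (Fin n) ℂ) * Matrix.single a b 1 * (J (Fin n) ℂ * toMat M ^ j) : MatN n) b a := by
    intro b a
    rw [← Matrix.add_apply]
    congr 1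
    rw [sympl, Matrix.mul_add, Matrix.add_mul, Matrix.transpose_single]
    simp only [Matrix.mul_assoc]
  simp only [e, Finset.sum_add_distrib]
  rw [tr_sum1, tr_sum2, ← trace_pow_inv]
  congr 2
  rw [Matrix.transpose_mul, Matrix.J_transpose, Matrix.mul_neg, Matrix.mul_neg, Matrix.mul_assoc,
    ← Matrix.mul_assoc (J (Fin n) ℂ), J_pow_J]
  simp

theorem loop_pt2 (M : USp n) (k l : ℕ) :
    ∑ b, ∑ a, (toMat M ^ k) b a * trace (sympl (Matrix.single b a 1) * toMat M ^ l) =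
      trace (toMat M ^ (k + l)) - trace (toMat M ^ (absd k l)) := by
  have e : ∀ b a : Fin n ⊕ Fin n,
      (toMat M ^ k) b a * trace (sympl (Matrix.single b a 1) * toMat M ^ l) =
      (toMat M ^ k) b a * trace (Matrix.single b a 1 * toMat M ^ l) +
      (toMat M ^ k) b a * trace (Matrix.single a b 1 *
        (J (Fin n) ℂ * toMat M ^ l * J (Fin n) ℂ)) := by
    intro b a
    rw [← mul_add]
    congr 1
    rw [sympl, Matrix.add_mul, Matrix.trace_add, Matrix.transpose_single]
    congr 1
    rw [Matrix.mul_assoc, Matrix.mul_assoc, Matrix.trace_mul_comm]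
    simp only [Matrix.mul_assoc]
  simp only [e, Finset.sum_add_distrib]
  rw [tr_sum3, tr_sum4, ← trace_pow_inv, ← pow_add, sub_eq_add_neg]
  congr 1
  have : (J (Fin n) ℂ * toMat M ^ l * J (Fin n) ℂ)ᵀ = - (toMat M⁻¹ ^ l) := by
    rw [← J_pow_J]
    simp only [Matrix.transpose_mul, Matrix.J_transpose, Matrix.mul_neg, Matrix.neg_mul, neg_neg,
      Matrix.mul_assoc]
  rw [this, Matrix.mul_neg, Matrix.trace_neg]

theorem ptr_cons (l : ℕ) (S : Multiset ℕ) (A : MatN n) :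
    ptr (l ::ₘ S) A = trace (A ^ l) * ptr S A := by simp [ptr]

theorem sum_msum {ι : Type*} (s : Finset ι) (S : Multiset ℕ) (f : ι → ℕ → ℂ) :
    ∑ b ∈ s, (S.map fun l => f b l).sum = (S.map fun l => ∑ b ∈ s, f b l).sum := by
  induction S using Multiset.induction with
  | empty => simp
  | cons l S ih => simp [Finset.sum_add_distrib, ih]

theorem testf'_sum (M : USp n) (k : ℕ) (S : Multiset ℕ) :
    ∑ b, ∑ a, testf' k S b a (sympl (Matrix.single b a 1)) (toMat M) =
    ∑ i ∈ Finset.range k, (ptr (i ::ₘ (k - i) ::ₘ S) (toMat M) +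
        ptr (absd k (2 * i) ::ₘ S) (toMat M)) +
      (S.map fun l : ℕ => (l : ℂ) * (ptr ((k + l) ::ₘ S.erase l) (toMat M) -
        ptr (absd k l ::ₘ S.erase l) (toMat M))).sum := by
  simp only [testf', Finset.sum_add_distrib]
  congr 1
  · simp only [← Finset.sum_mul, Matrix.sum_apply]
    have : ∑ b : Fin n ⊕ Fin n, ∑ a : Fin n ⊕ Fin n, ∑ r ∈ Finset.range k,
        (toMat M ^ r * sympl (Matrix.single b a 1) * toMat M ^ (k - r) : MatN n) b a =
        ∑ r ∈ Finset.range k, ∑ b : Fin n ⊕ Fin n, ∑ a : Fin n ⊕ Fin n,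
        (toMat M ^ r * sympl (Matrix.single b a 1) * toMat M ^ (k - r) : MatN n) b a := by
      rw [Finset.sum_congr rfl (fun b _ => Finset.sum_comm), Finset.sum_comm]
    rw [this, Finset.sum_mul, ← Finset.sum_add_distrib]
    apply Finset.sum_congr rfl
    intro r hr
    rw [Finset.mem_range] at hr
    rw [loop_pt1, ptr_cons, ptr_cons, ptr_cons, show absd r (k - r) = absd k (2 * r) by
      unfold absd; omega]
    ring
  · simp only [← Multiset.sum_map_mul_left, sum_msum]
    congr 1
    apply Multiset.map_congr rfl
    intro l _
    have e : ∀ b a : Fin n ⊕ Fin n, (toMat M ^ k) b a * (ptr (S.erase l) (toMat M) *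
        ((l : ℂ) * trace (sympl (Matrix.single b a 1) * toMat M ^ l))) =
        (l * ptr (S.erase l) (toMat M)) * ((toMat M ^ k) b a *
          trace (sympl (Matrix.single b a 1) * toMat M ^ l)) := fun b a => by ring
    simp only [e, ← Finset.mul_sum]
    rw [loop_pt2, ptr_cons, ptr_cons]
    ring

end

theorem integral_msum {n : ℕ} (μ : Measure (USp n)) [IsProbabilityMeasure μ] (S : Multiset ℕ)
    (f : ℕ → USp n → ℂ) (hf : ∀ l, Continuous (f l)) :
    ∫ M, (S.map fun l => f l M).sum ∂μ = (S.map fun l => ∫ M, f l M ∂μ).sum := by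
  induction S using Multiset.induction with
  | empty => simp
  | cons l S ih =>
    simp only [Multiset.map_cons, Multiset.sum_cons]
    rw [integral_add (usp_integrable μ _ (hf l)) (usp_integrable μ _ (continuous_msum S f hf)), ih]

theorem usp_loop {n : ℕ} (μ : Measure (USp n)) [IsProbabilityMeasure μ] [μ.IsHaarMeasure] :
    LoopEq (fun S => ∫ M, ptr S (toMat M) ∂μ) := by
  intro k _ S
  have hc : ∀ T : Multiset ℕ, Continuous (fun M : USp n => ptr T (toMat M)) := fun T =>
    (continuous_ptr T).comp continuous_toMat
  have hi : ∀ T : Multiset ℕ, Integrable (fun M : USp n => ptr T (toMat M)) μ := fun T =>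
    usp_integrable μ _ (hc T)
  have hi2 : ∀ A B : Multiset ℕ, Integrable (fun M : USp n => ptr A (toMat M) + ptr B (toMat M)) μ :=
    fun A B => (hi A).add (hi B)
  have h1 : ∫ M, ∑ b, ∑ a, testf' k S b a (sympl (Matrix.single b a 1)) (toMat M) ∂μ = 0 := by
    have hi' : ∀ b a : Fin n ⊕ Fin n, Integrable
        (fun M => testf' k S b a (sympl (Matrix.single b a 1)) (toMat M)) μ := fun b a =>
      usp_integrable μ _ ((continuous_testf' k S b a _).comp continuous_toMat)
    rw [integral_finsetSum _ (fun b _ => integrable_finsetSum _ fun a _ => hi' b a)]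
    apply Finset.sum_eq_zero
    intro b _
    rw [integral_finsetSum _ (fun a _ => hi' b a)]
    apply Finset.sum_eq_zero
    intro a _
    exact testf'_integral μ k S b a _
  simp only [testf'_sum] at h1
  have hc2 : ∀ l : ℕ, Continuous (fun M : USp n => (l : ℂ) *
      (ptr ((k + l) ::ₘ S.erase l) (toMat M) - ptr (absd k l ::ₘ S.erase l) (toMat M))) :=
    fun l => continuous_const.mul ((hc _).sub (hc _))
  rw [integral_add (integrable_finsetSum _ fun i _ =>
      hi2 (i ::ₘ (k - i) ::ₘ S) (absd k (2 * i) ::ₘ S))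
    (usp_integrable μ _ (continuous_msum S (fun (l : ℕ) (M : USp n) => (l : ℂ) *
      (ptr ((k + l) ::ₘ S.erase l) (toMat M) - ptr (absd k l ::ₘ S.erase l) (toMat M))) hc2)),
    integral_finsetSum _ fun i _ =>
      hi2 (i ::ₘ (k - i) ::ₘ S) (absd k (2 * i) ::ₘ S),
    integral_msum μ S (fun (l : ℕ) (M : USp n) => (l : ℂ) *
      (ptr ((k + l) ::ₘ S.erase l) (toMat M) - ptr (absd k l ::ₘ S.erase l) (toMat M))) hc2] at h1
  beta_reduce
  rw [← h1]
  congr 1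
  · apply Finset.sum_congr rfl
    intro i _
    rw [integral_add (hi _) (hi _)]
  · congr 1
    apply Multiset.map_congr rfl
    intro l _
    rw [integral_const_mul, integral_sub (hi _) (hi _)]

theorem usp_ptr {n : ℕ} (μ : Measure (USp n)) [IsProbabilityMeasure μ] [μ.IsHaarMeasure]
    (S : Multiset ℕ) (hS : S.sum ≤ 2 * n + 1) : ∫ M, ptr S (toMat M) ∂μ = Gm n S := by
  refine loop_unique n (fun S => ∫ M, ptr S (toMat M) ∂μ) ?_ ?_ (usp_loop μ) S hS
  · simp [ptr]
  · intro S
    simp only [ptr_cons, pow_zero]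
    rw [integral_const_mul]
    congr 1
    simp
    ring

theorem usp_moment {n : ℕ} (μ : Measure (USp n)) [IsProbabilityMeasure μ] [μ.IsHaarMeasure]
    (j a : ℕ) (h : a * j ≤ 2 * n + 1) : ∫ M, (trace (toMat M ^ j)) ^ a ∂μ = gmom n j a := by
  have h1 := usp_ptr μ (Multiset.replicate a j) (by simpa using h)
  rw [Gm_eq n _ {j} (by
    intro x hx
    rw [Multiset.mem_toFinset] at hx
    simpa using Multiset.eq_of_mem_replicate hx), Finset.prod_singleton,
    Multiset.count_replicate_self] at h1
  rw [← h1]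
  simp [ptr]

theorem usp_shift {n : ℕ} (μ : Measure (USp n)) [IsProbabilityMeasure μ] [μ.IsHaarMeasure]
    (j a : ℕ) (h : a * j ≤ 2 * n + 1) (e : ℂ) : ∫ M, (trace (toMat M ^ j) + e) ^ a ∂μ =
      ∑ b ∈ Finset.range (a + 1), gmom n j b * e ^ (a - b) * (a.choose b : ℂ) := by
  simp only [add_pow]
  have hi : ∀ b, Integrable (fun M : USp n => trace (toMat M ^ j) ^ b * e ^ (a - b) *
      (a.choose b : ℂ)) μ := fun b => usp_integrable μ _
    (((((continuous_toMat.pow j).matrix_trace).pow b).mul continuous_const).mul continuous_const)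
  rw [integral_finsetSum _ (fun b _ => hi b)]
  apply Finset.sum_congr rfl
  intro b hb
  rw [Finset.mem_range] at hb
  rw [integral_mul_const, integral_mul_const, usp_moment μ j b]
  exact le_trans (Nat.mul_le_mul_right j (by omega)) h

/-- For `4j ≤ 2n + 1` and Haar-distributed `M` in `USp(2n,ℂ)`, the first four moments of
`W = Tr(M^j)/√j` (`j` odd) or `W = (Tr(M^j) + 1)/√j` (`j` even) match those of a standard
normal: `E[W] = 0`, `E[W²] = 1`, `E[W³] = 0`, `E[W⁴] = 3`.  (The trace is real; `W` is
recorded via the real part.) -/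
theorem usp_four_moments (n j : ℕ) (hn : 0 < n) (hj : 0 < j) (h : 4 * j ≤ 2 * n + 1)
    (μ : Measure (USp n)) [IsProbabilityMeasure μ] [μ.IsHaarMeasure]
    (W : USp n → ℝ)
    (hW : W = fun M => if Odd j then (trUSp M j).re / Real.sqrt j
      else ((trUSp M j).re + 1) / Real.sqrt j) :
    (∫ M, W M ∂μ = 0) ∧ (∫ M, (W M) ^ 2 ∂μ = 1) ∧
      (∫ M, (W M) ^ 3 ∂μ = 0) ∧ (∫ M, (W M) ^ 4 ∂μ = 3) := by
  have hW' : ∀ M, ((W M : ℝ) : ℂ) = (trace (toMat M ^ j) + eta j) / (Real.sqrt j : ℂ) := by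
    intro M
    have ht : trUSp M j = trace (toMat M ^ j) := by
      unfold trUSp
      rw [zpow_natCast]
      rfl
    rw [hW, ← trace_real M j]
    simp only [ht]
    by_cases ho : Odd j
    · have : eta j = 0 := by
        unfold eta; rw [if_neg]; rwa [Nat.not_even_iff_odd]
      rw [if_pos ho, this]
      push_cast
      ring
    · have : eta j = 1 := by
        unfold eta; rw [if_pos]; rwa [← Nat.not_odd_iff_even]
      rw [if_neg ho, this]
      push_cast
      ring
  have hs : ((Real.sqrt j : ℝ) : ℂ) ^ 2 = j := by
    rw [← Complex.ofReal_pow, Real.sq_sqrt (Nat.cast_nonneg j)]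
    simp
  have hj0 : (j : ℂ) ≠ 0 := by exact_mod_cast hj.ne'
  have hs0 : ((Real.sqrt j : ℝ) : ℂ) ≠ 0 := by
    intro h0
    rw [h0] at hs
    apply hj0
    rw [← hs]; simp
  have key : ∀ a : ℕ, a ≤ 4 → (((∫ M, (W M) ^ a ∂μ : ℝ)) : ℂ) =
      (∑ b ∈ Finset.range (a + 1), gmom n j b * (eta j) ^ (a - b) * (a.choose b : ℂ)) /
        (Real.sqrt j : ℂ) ^ a := by
    intro a ha
    rw [← usp_shift μ j a (le_trans (Nat.mul_le_mul_right j ha) h) (eta j), ← integral_complex_ofReal,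
      ← integral_div]
    congr 1
    funext M
    rw [Complex.ofReal_pow, hW', div_pow]
  have hjn : j ≠ 0 := hj.ne'
  refine ⟨?_, ?_, ?_, ?_⟩
  · have := key 1 (by norm_num)
    simp only [pow_one] at this
    apply Complex.ofReal_injective
    rw [this]
    simp [Finset.sum_range_succ, gmom, hjn]
  · apply Complex.ofReal_injective
    rw [key 2 (by norm_num), hs]
    simp [Finset.sum_range_succ, gmom, hjn]
    field_simp
    ring
  · apply Complex.ofReal_injective
    rw [key 3 (by norm_num)]
    simp [Finset.sum_range_succ, gmom, hjn, Nat.choose]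
    ring
  · apply Complex.ofReal_injective
    rw [key 4 (by norm_num), show ((Real.sqrt j : ℝ) : ℂ) ^ 4 = (((Real.sqrt j : ℝ) : ℂ) ^ 2) ^ 2 by ring,
      hs]
    simp [Finset.sum_range_succ, gmom, hjn, Nat.choose]
    field_simp
    ring
end
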